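/- Let φ : ℕ → ℕ₀ be a function with φ(d) ≤ d for all d ∈ ℕ, and suppose that for some c ∈ (0,1] one has φ(d) ∼ c·d as d → ∞ (i.e. φ(d)/d → c). Then for every α ∈ (0,1): liminf_{d→∞} q_L(α,d,φ(d)) · (cd)^{1/(1−α)} ≥ (1−α)/4. -/

import Mathlib

open MeasureTheory Filter ENNReal

/-- Sites of `ℤ^{d+1}`. -/
abbrev Site (d : ℕ) := Fin (d + 1) → ℤ

/-- Site-percolation configurations on `ℤ^{d+1}`: a site is open iff its value is `true`. -/
abbrev Config (d : ℕ) := Site d → Bool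

/-- `P` is the i.i.d. Bernoulli(`p`) product measure on `{0,1}^ι`: it is a probability
measure whose cylinder events have the correct product probabilities. -/
def IsBernoulli {ι : Type*} (p : ℝ) (P : Measure (ι → Bool)) : Prop :=
  IsProbabilityMeasure P ∧
    ∀ (s : Finset ι) (f : ι → Bool),
      P {ω | ∀ x ∈ s, ω x = f x} =
        ∏ x ∈ s, (if f x then ENNReal.ofReal p else ENNReal.ofReal (1 - p))

/-- A function `F : ℤ^d → ℤ` is Lipschitz: `‖x − y‖₁ = 1 → |F x − F y| ≤ 1`. -/
def IsLipschitzFn {d : ℕ} (F : (Fin d → ℤ) → ℤ) : Prop :=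
  ∀ x y : Fin d → ℤ, (∑ i, |x i - y i|) = 1 → |F x - F y| ≤ 1

/-- Height `⌊α ∑ᵢ ηᵢ xᵢ⌋` of the tilted plane `L^{α,d}_η` above `x ∈ ℤ^d`. -/
noncomputable def planeHt (α : ℝ) {d : ℕ} (η x : Fin d → ℤ) : ℤ :=
  ⌊α * ∑ i, (η i : ℝ) * (x i : ℝ)⌋

/-- `η ∈ {-1,0,1}^d`. -/
def IsSign {d : ℕ} (η : Fin d → ℤ) : Prop := ∀ i, η i = -1 ∨ η i = 0 ∨ η i = 1

/-- The event `LIP^{α,d}_η` that there is an open Lipschitz surface lying (strictly) above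
the tilted plane `L^{α,d}_η`. -/
def LIP (α : ℝ) {d : ℕ} (η : Fin d → ℤ) : Set (Config d) :=
  {ω | ∃ F : (Fin d → ℤ) → ℤ, IsLipschitzFn F ∧
    ∀ x : Fin d → ℤ, ω (Fin.snoc x (F x)) = true ∧ planeHt α η x < F x}

/-- `pc` is the critical probability `p_L(α,d,η)` of Lipschitz percolation above the tilted
plane `L^{α,d}_η`: `pc ∈ (0,1)`, for `p` below it there is `P_p`-a.s. no open Lipschitz
surface above the plane, and for `p` above it there `P_p`-a.s. is one.
(Here `P p` is the Bernoulli(`p`) product measure on `{0,1}^{ℤ^{d+1}}`.) -/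
def IsCriticalProb {d : ℕ} (P : ℝ → Measure (Config d)) (α : ℝ) (η : Fin d → ℤ)
    (pc : ℝ) : Prop :=
  pc ∈ Set.Ioo (0 : ℝ) 1 ∧
    (∀ p, 0 ≤ p → p < pc → P p (LIP α η) = 0) ∧
    (∀ p, pc < p → p ≤ 1 → P p (LIP α η) = 1)

/-- The canonical direction vector `η ∈ {-1,0,1}^d` with `k` entries equal to `1`; the
critical probability `p_L(α,d,η)` depends on `η` only through `k = ‖η‖₁`, and
`p_L(α,d,k)` denotes the common value. -/
def etaK (d k : ℕ) : Fin d → ℤ := fun i => if (i : ℕ) < k then 1 else 0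

/-!
Write `γ = 1 / (1 - α)`, and let `k` be the number of coordinates in which the plane is tilted.

The lowest candidate surface lies just above the sites that can be reached from below the plane by
paths that climb only onto closed sites and otherwise descend diagonally; it is an open Lipschitz
surface as soon as these sites are bounded above over every base point.
Weighting a path by a power of `θ` in its height relative to the plane, a first moment computation
shows that this is the case once `k * θ ^ (α - 1) + 2 * d * θ⁻¹ + q * θ ≤ 1`. With
`θ = (b * k) ^ γ` the middle term is negligible and the first one is `b⁻¹`, so
`q_L * k ^ γ ≥ (1 - b⁻¹) * b ^ (-γ) - o(1)`. The best choice is `b = 1 + (1 - α)`, and the strict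
convexity of `x * log x` shows that the constant then exceeds `(1 - α) / 4`.

The `liminf` of an unbounded real sequence would be a junk value, so `q_L * k ^ γ` also has to be
bounded. Let walks climb in the uphill tilted directions, except that they drop by one more at the
times `⌈g * j⌉`, where `g = γ - 1 / log k`. If the site such a walk would otherwise visit is closed
at each of these times, then a Lipschitz surface starting below the walk stays below it and ends up
below the plane. A second moment bound, in which the meetings of two walks satisfy a renewal
inequality, makes such a walk exist with probability at least `1 / 2`.
-/

section Lipschitz

variable {ι : Type*} [Fintype ι] [DecidableEq ι]

lemma exists_eq_single_of_sum_abs_eq_one {u : ι → ℤ} (hu : ∑ i, |u i| = 1) :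
    ∃ (i : ι) (ε : ℤˣ), u = Pi.single i ↑ε := by
  obtain ⟨i, -, hi⟩ := Finset.exists_ne_zero_of_sum_ne_zero (hu.trans_ne one_ne_zero)
  have hpos : 1 ≤ |u i| := Int.one_le_abs (abs_ne_zero.1 hi)
  have hsplit := Finset.add_sum_erase Finset.univ (fun j => |u j|) (Finset.mem_univ i)
  have hnonneg : ∀ j ∈ Finset.univ.erase i, 0 ≤ |u j| := fun j _ => abs_nonneg _
  have hrest : ∑ j ∈ Finset.univ.erase i, |u j| = 0 :=
    le_antisymm (by linarith) (Finset.sum_nonneg hnonneg)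
  have hunit : IsUnit (u i) := Int.isUnit_iff_abs_eq.2 (by linarith)
  refine ⟨i, hunit.unit, funext fun j => ?_⟩
  obtain rfl | hj := eq_or_ne j i
  · simp
  · simpa [hj] using (Finset.sum_eq_zero_iff_of_nonneg hnonneg).1 hrest j (by simp [hj])

lemma isLipschitzFn_iff_forall_add_single {d : ℕ} {F : (Fin d → ℤ) → ℤ} :
    IsLipschitzFn F ↔ ∀ x i (ε : ℤˣ), F (x + Pi.single i ↑ε) ≤ F x + 1 := by
  constructor
  · intro hF x i ε
    have hdist : ∑ j, |(x + Pi.single i (ε : ℤ) : Fin d → ℤ) j - x j| = 1 := by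
      simp only [Pi.add_apply, add_sub_cancel_left, Pi.single_apply, apply_ite abs, abs_zero]
      simp [Int.isUnit_iff_abs_eq.1 ε.isUnit]
    linarith [(abs_le.1 (hF _ _ hdist)).2]
  · intro hF x y hxy
    obtain ⟨i, ε, hε⟩ := exists_eq_single_of_sum_abs_eq_one (u := x - y) hxy
    have hx := hF y i ε
    have hy := hF x i (-ε)
    rw [Units.val_neg, Pi.single_neg, ← hε] at hy
    rw [← hε] at hx
    simp only [add_sub_cancel, neg_sub] at hx hy
    exact abs_le.2 ⟨by linarith, by linarith⟩

lemma snoc_add_snoc {M : Type*} [Add M] {n : ℕ} (x y : Fin n → M) (a b : M) :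
    (Fin.snoc x a + Fin.snoc y b : Fin (n + 1) → M) = Fin.snoc (x + y) (a + b) := by
  ext i
  refine Fin.lastCases ?_ (fun j => ?_) i <;> simp

end Lipschitz

section Bernoulli

variable {ι : Type*} {p : ℝ} {P : Measure (ι → Bool)}

/-- The cylinder event that every site of `S` is closed. -/
def closedOn (S : Finset ι) : Set (ι → Bool) := {ω | ∀ x ∈ S, ω x = false}

lemma closedOn_inter_closedOn [DecidableEq ι] (S T : Finset ι) :
    closedOn S ∩ closedOn T = closedOn (S ∪ T) := by
  ext ω
  simp [closedOn, or_imp, forall_and]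

lemma measurableSet_closedOn (S : Finset ι) : MeasurableSet (closedOn S) := by
  have h : closedOn S = ⋂ x ∈ S, {ω : ι → Bool | ω x = false} := by
    ext ω
    simp [closedOn]
  rw [h]
  exact S.measurableSet_biInter fun x _ =>
    measurableSet_eq_fun (measurable_pi_apply x) measurable_const

lemma measure_closedOn (hP : IsBernoulli p P) (S : Finset ι) :
    P (closedOn S) = ENNReal.ofReal (1 - p) ^ S.card := by
  simpa [closedOn] using hP.2 S fun _ => false

lemma measureReal_closedOn (hp : p ≤ 1) (hP : IsBernoulli p P) (S : Finset ι) :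
    P.real (closedOn S) = (1 - p) ^ S.card := by
  simp [measureReal_def, measure_closedOn hP, hp]

end Bernoulli

section Reachability

variable {V ι : Type*} (step : ι → V → V) (below : V → V) (B : Set V)

/-- The points from which `B` can be reached in configuration `ω` by at most `n` moves, a move
leading from `z` to some `step i z` or, provided that `z` is closed, to `below z`. -/
def reachIn (ω : V → Bool) : ℕ → Set V
  | 0 => B
  | n + 1 => {z | z ∈ reachIn ω n ∨ (∃ i, step i z ∈ reachIn ω n) ∨
      ω z = false ∧ below z ∈ reachIn ω n}

/-- The points from which `B` can be reached in configuration `ω`. -/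
def reachable (ω : V → Bool) : Set V := ⋃ n, reachIn step below B ω n

/-- The event that `T` is closed and that `z` joins `reachIn`, within `n` moves, at a time when no
point of `T` has joined. -/
def reachAvoiding (n : ℕ) (z : V) (T : Finset V) : Set (V → Bool) :=
  {ω | ω ∈ closedOn T ∧ ∃ m ≤ n, z ∈ reachIn step below B ω m ∧
    ∀ t ∈ T, t ∉ reachIn step below B ω m}

variable {step below B}

lemma subset_reachable {ω : V → Bool} : B ⊆ reachable step below B ω :=
  Set.subset_iUnion (reachIn step below B ω) 0

lemma mem_reachable_of_step_mem {ω : V → Bool} {z : V} (i : ι)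
    (h : step i z ∈ reachable step below B ω) : z ∈ reachable step below B ω := by
  obtain ⟨n, hn⟩ := Set.mem_iUnion.1 h
  exact Set.mem_iUnion.2 ⟨n + 1, Or.inr (Or.inl ⟨i, hn⟩)⟩

lemma mem_reachable_of_below_mem {ω : V → Bool} {z : V} (hz : ω z = false)
    (h : below z ∈ reachable step below B ω) : z ∈ reachable step below B ω := by
  obtain ⟨n, hn⟩ := Set.mem_iUnion.1 h
  exact Set.mem_iUnion.2 ⟨n + 1, Or.inr (Or.inr ⟨hz, hn⟩)⟩

lemma reachAvoiding_eq_empty_of_mem {n : ℕ} {z : V} {T : Finset V} (hz : z ∈ T) :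
    reachAvoiding step below B n z T = ∅ :=
  Set.eq_empty_of_forall_notMem fun _ ⟨_, _, _, hm, hT⟩ => hT z hz hm

lemma reachAvoiding_zero_eq_empty {z : V} {T : Finset V} (hz : z ∉ B) :
    reachAvoiding step below B 0 z T = ∅ := by
  refine Set.eq_empty_of_forall_notMem fun ω ⟨_, m, hm, hzm, _⟩ => hz ?_
  rwa [Nat.le_zero.1 hm] at hzm

-- Look at the first time at which `z` is reached while `T` is still avoided.
lemma reachAvoiding_succ_subset [DecidableEq V] {n : ℕ} {z : V} {T : Finset V} (hz : z ∉ B) :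
    reachAvoiding step below B (n + 1) z T ⊆
      (⋃ i, reachAvoiding step below B n (step i z) T) ∪
        reachAvoiding step below B n (below z) (insert z T) := by
  classical
  rintro ω ⟨hT, hex⟩
  obtain ⟨hmn, hzm, hTm⟩ := Nat.find_spec hex
  have hmin := fun m => Nat.find_min hex (m := m)
  generalize Nat.find hex = m at hmn hzm hTm hmin
  obtain _ | m := m
  · exact absurd hzm hz
  have hTm' : ∀ t ∈ T, t ∉ reachIn step below B ω m := fun t ht h => hTm t ht (Or.inl h)
  have hzm' : z ∉ reachIn step below B ω m := fun h =>
    hmin m m.lt_succ_self ⟨by omega, h, hTm'⟩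
  rcases hzm with h | ⟨i, h⟩ | ⟨hclosed, h⟩
  · exact absurd h hzm'
  · exact Or.inl (Set.mem_iUnion.2 ⟨i, hT, m, by omega, h, hTm'⟩)
  · exact Or.inr ⟨(Finset.forall_mem_insert _ _ _).2 ⟨hclosed, hT⟩, m, by omega, h,
      (Finset.forall_mem_insert _ _ _).2 ⟨hzm', hTm'⟩⟩

variable [Fintype ι] {p : ℝ} {P : Measure (V → Bool)} {g : V → ℝ≥0∞}

-- `T` collects the closed sites used so far. Since the walk avoids `T`, each further closed site is
-- a new one and contributes an independent factor `1 - p`.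
lemma measure_reachAvoiding_le (hP : IsBernoulli p P) (hgB : ∀ z ∈ B, 1 ≤ g z)
    (hg : ∀ z, ∑ i, g (step i z) + ENNReal.ofReal (1 - p) * g (below z) ≤ g z)
    (n : ℕ) (z : V) (T : Finset V) :
    P (reachAvoiding step below B n z T) ≤ ENNReal.ofReal (1 - p) ^ T.card * g z := by
  classical
  have hbase (n : ℕ) (z : V) (T : Finset V) (hz : z ∈ B) :
      P (reachAvoiding step below B n z T) ≤ ENNReal.ofReal (1 - p) ^ T.card * g z := by
    calc P (reachAvoiding step below B n z T) ≤ P (closedOn T) := measure_mono fun ω h => h.1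
      _ = ENNReal.ofReal (1 - p) ^ T.card * 1 := by rw [measure_closedOn hP, mul_one]
      _ ≤ ENNReal.ofReal (1 - p) ^ T.card * g z := by gcongr; exact hgB z hz
  induction n generalizing z T with
  | zero =>
    by_cases hz : z ∈ B
    · exact hbase 0 z T hz
    · simp [reachAvoiding_zero_eq_empty hz]
  | succ n ih =>
    by_cases hz : z ∈ B
    · exact hbase (n + 1) z T hz
    by_cases hzT : z ∈ T
    · simp [reachAvoiding_eq_empty_of_mem hzT]
    calc P (reachAvoiding step below B (n + 1) z T)
        ≤ ∑ i, P (reachAvoiding step below B n (step i z) T) +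
            P (reachAvoiding step below B n (below z) (insert z T)) :=
          (measure_mono (reachAvoiding_succ_subset hz)).trans <| (measure_union_le _ _).trans <|
            add_le_add_left (measure_iUnion_fintype_le _ _) _
      _ ≤ ∑ i, ENNReal.ofReal (1 - p) ^ T.card * g (step i z) +
            ENNReal.ofReal (1 - p) ^ (insert z T).card * g (below z) :=
          add_le_add (Finset.sum_le_sum fun i _ => ih _ _) (ih _ _)
      _ = ENNReal.ofReal (1 - p) ^ T.card *
            (∑ i, g (step i z) + ENNReal.ofReal (1 - p) * g (below z)) := by
          rw [Finset.card_insert_of_notMem hzT, mul_add, Finset.mul_sum, pow_succ, mul_assoc]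
      _ ≤ ENNReal.ofReal (1 - p) ^ T.card * g z := by gcongr; exact hg z

lemma measure_mem_reachable_le (hP : IsBernoulli p P) (hgB : ∀ z ∈ B, 1 ≤ g z)
    (hg : ∀ z, ∑ i, g (step i z) + ENNReal.ofReal (1 - p) * g (below z) ≤ g z) (z : V) :
    P {ω | z ∈ reachable step below B ω} ≤ g z := by
  have hunion : {ω | z ∈ reachable step below B ω} = ⋃ n, reachAvoiding step below B n z ∅ := by
    ext ω
    simp only [reachable, reachAvoiding, closedOn, Set.mem_ofPred_eq, Set.mem_iUnion]
    exact ⟨fun ⟨n, h⟩ => ⟨n, by simp, n, le_rfl, h, by simp⟩, fun ⟨_, _, m, _, h, _⟩ => ⟨m, h⟩⟩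
  have hmono : Monotone fun n => reachAvoiding step below B n z ∅ :=
    fun _ _ hle _ ⟨hT, m, hm, h⟩ => ⟨hT, m, hm.trans hle, h⟩
  rw [hunion, hmono.measure_iUnion]
  exact iSup_le fun n => by simpa using measure_reachAvoiding_le hP hgB hg n z ∅

end Reachability

section LowestSurface

variable {d : ℕ}

/-- The diagonal upward moves of the reachability argument. -/
def siteStep (m : Fin d × ℤˣ) (z : Site d) : Site d := z + Fin.snoc (Pi.single m.1 ↑m.2) 1

/-- The vertical downward move of the reachability argument, available at closed sites only. -/
def siteBelow (z : Site d) : Site d := z - Fin.snoc 0 1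

/-- The sites on or below the graph of `b : ℤ^d → ℤ`. -/
def siteHypograph (b : (Fin d → ℤ) → ℤ) : Set (Site d) := {z | z (Fin.last d) ≤ b (Fin.init z)}

lemma siteStep_snoc (i : Fin d) (ε : ℤˣ) (x : Fin d → ℤ) (h : ℤ) :
    siteStep (i, ε) (Fin.snoc x h) = Fin.snoc (x + Pi.single i ↑ε) (h + 1) :=
  snoc_add_snoc ..

lemma siteBelow_snoc (x : Fin d → ℤ) (h : ℤ) :
    siteBelow (Fin.snoc x h) = Fin.snoc x (h - 1) := by
  rw [siteBelow, sub_eq_iff_eq_add, snoc_add_snoc, add_zero, sub_add_cancel]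

-- The surface is the lowest one above all reachable sites.
lemma exists_isLipschitzFn_of_forall_bddAbove {b : (Fin d → ℤ) → ℤ} {ω : Config d}
    (hω : ∀ x : Fin d → ℤ, ∃ H : ℤ, ∀ h : ℤ,
      Fin.snoc x h ∈ reachable siteStep siteBelow (siteHypograph b) ω → h ≤ H) :
    ∃ F : (Fin d → ℤ) → ℤ, IsLipschitzFn F ∧ ∀ x, ω (Fin.snoc x (F x)) = true ∧ b x < F x := by
  have hbase (x : Fin d → ℤ) :
      Fin.snoc x (b x) ∈ reachable siteStep siteBelow (siteHypograph b) ω :=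
    subset_reachable (by simp [siteHypograph])
  choose top htop hmax using fun x => Int.exists_greatest_of_bdd (hω x) ⟨b x, hbase x⟩
  refine ⟨fun x => top x + 1, isLipschitzFn_iff_forall_add_single.2 fun x i ε => ?_,
    fun x => ⟨?_, Int.lt_add_one_of_le (hmax x _ (hbase x))⟩⟩
  · have hstep : siteStep (i, ε) (Fin.snoc x (top (x + Pi.single i ↑ε) - 1)) ∈
        reachable siteStep siteBelow (siteHypograph b) ω := by
      simpa only [siteStep_snoc, sub_add_cancel] using htop (x + Pi.single i ↑ε)
    linarith [hmax x _ (mem_reachable_of_step_mem _ hstep)]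
  · by_contra hclosed
    have hbelow : siteBelow (Fin.snoc x (top x + 1)) ∈
        reachable siteStep siteBelow (siteHypograph b) ω := by
      simpa only [siteBelow_snoc, add_sub_cancel_right] using htop x
    linarith [hmax x _ (mem_reachable_of_below_mem (by simpa using hclosed) hbelow)]

end LowestSurface

section Tilt

variable {d : ℕ} {α : ℝ} {η : Fin d → ℤ}

/-- The number `k = ‖η‖₁` of directions along which the plane is tilted. -/
def tiltDim (η : Fin d → ℤ) : ℕ := Fintype.card {i // η i ≠ 0}

/-- The signed vertical distance from `z` up to the tilted plane, before rounding. -/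
noncomputable def tiltDepth (α : ℝ) (η : Fin d → ℤ) (z : Site d) : ℝ :=
  α * ∑ i, (η i : ℝ) * z (Fin.castSucc i) - z (Fin.last d)

lemma tiltDepth_snoc (x : Fin d → ℤ) (h : ℤ) :
    tiltDepth α η (Fin.snoc x h) = α * ∑ i, (η i : ℝ) * x i - h := by
  simp [tiltDepth]

lemma tiltDepth_add (z w : Site d) :
    tiltDepth α η (z + w) = tiltDepth α η z + tiltDepth α η w := by
  simp only [tiltDepth, Pi.add_apply, Int.cast_add, mul_add, Finset.sum_add_distrib]
  ring

lemma tiltDepth_siteStep (m : Fin d × ℤˣ) (z : Site d) :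
    tiltDepth α η (siteStep m z) = tiltDepth α η z + (α * (η m.1 * (m.2 : ℤ)) - 1) := by
  rw [siteStep, tiltDepth_add, tiltDepth_snoc]
  simp [Pi.single_apply]

lemma tiltDepth_siteBelow (z : Site d) :
    tiltDepth α η (siteBelow z) = tiltDepth α η z + 1 := by
  have h := tiltDepth_add (α := α) (η := η) (siteBelow z) (Fin.snoc 0 1)
  rw [siteBelow, sub_add_cancel, tiltDepth_snoc] at h
  simp [siteBelow, h]

lemma mem_siteHypograph_planeHt {z : Site d} :
    z ∈ siteHypograph (planeHt α η) ↔ 0 ≤ tiltDepth α η z := by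
  rw [tiltDepth, sub_nonneg]
  exact Int.le_floor

lemma isSign_etaK (d k : ℕ) : IsSign (etaK d k) := fun i => by
  unfold etaK
  split_ifs <;> simp

lemma tiltDim_etaK {d k : ℕ} (hkd : k ≤ d) : tiltDim (etaK d k) = k := by
  simp [tiltDim, etaK, Fintype.card_subtype, Fin.card_filter_val_lt, hkd]

lemma sum_units_rpow_le {θ : ℝ} (hα : 0 ≤ α) (hθ : 1 ≤ θ) {s : ℤ} (hs : s = -1 ∨ s = 0 ∨ s = 1) :
    ∑ ε : ℤˣ, θ ^ (α * (s * (ε : ℤ)) - 1) ≤ (if s ≠ 0 then θ ^ (α - 1) else 0) + 2 * θ⁻¹ := by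
  have hneg : θ ^ (-α - 1) ≤ θ⁻¹ := by
    rw [← Real.rpow_neg_one]
    exact Real.rpow_le_rpow_of_exponent_le hθ (by linarith)
  have hinv : 0 ≤ θ⁻¹ := by positivity
  rw [show (Finset.univ : Finset ℤˣ) = {1, -1} from rfl, Finset.sum_pair (by decide)]
  simp only [Units.val_one, Units.val_neg, Int.cast_one, Int.cast_neg, mul_one, mul_neg]
  rcases hs with rfl | rfl | rfl
  · rw [Int.cast_neg, Int.cast_one, mul_neg_one, neg_neg, if_pos (by decide)]
    linarith
  · rw [Int.cast_zero, mul_zero, neg_zero, zero_sub, Real.rpow_neg_one, if_neg (by decide)]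
    linarith
  · rw [Int.cast_one, mul_one, if_pos (by decide)]
    linarith

lemma sum_rpow_tiltDepth_step_le {θ : ℝ} (hα : 0 ≤ α) (hθ : 1 ≤ θ) (hη : IsSign η) :
    ∑ m : Fin d × ℤˣ, θ ^ (α * (η m.1 * (m.2 : ℤ)) - 1) ≤
      tiltDim η * θ ^ (α - 1) + 2 * d * θ⁻¹ := by
  rw [Fintype.sum_prod_type]
  refine (Finset.sum_le_sum fun i _ => sum_units_rpow_le hα hθ (hη i)).trans_eq ?_
  rw [Finset.sum_add_distrib, ← Finset.sum_filter, Finset.sum_const, ← Fintype.card_subtype]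
  simp [tiltDim, mul_assoc, mul_left_comm]

-- Superharmonicity of the exponential weight `θ ^ tiltDepth` is exactly the hypothesis `h`.
lemma measure_mem_reachable_le_rpow {θ p : ℝ} (hα : 0 ≤ α) (hθ : 1 < θ) (hp : p ≤ 1)
    (hη : IsSign η) {P : Measure (Config d)} (hP : IsBernoulli p P)
    (h : tiltDim η * θ ^ (α - 1) + 2 * d * θ⁻¹ + (1 - p) * θ ≤ 1) (z : Site d) :
    P {ω | z ∈ reachable siteStep siteBelow (siteHypograph (planeHt α η)) ω} ≤
      ENNReal.ofReal (θ ^ tiltDepth α η z) := by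
  have hθ0 : 0 < θ := by linarith
  have hq : 0 ≤ 1 - p := by linarith
  refine measure_mem_reachable_le (g := fun z => ENNReal.ofReal (θ ^ tiltDepth α η z)) hP
    (fun z hz => ENNReal.one_le_ofReal.2 ?_) (fun z => ?_) z
  · exact Real.one_le_rpow hθ.le (mem_siteHypograph_planeHt.1 hz)
  · have hpow := fun x => Real.rpow_pos_of_pos hθ0 x
    rw [← ENNReal.ofReal_sum_of_nonneg fun m _ => (hpow _).le, ← ENNReal.ofReal_mul hq,
      ← ENNReal.ofReal_add (Finset.sum_nonneg fun m _ => (hpow _).le)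
        (mul_nonneg hq (hpow _).le)]
    refine ENNReal.ofReal_le_ofReal ?_
    simp only [tiltDepth_siteStep, tiltDepth_siteBelow, Real.rpow_add hθ0, Real.rpow_one]
    calc ∑ m : Fin d × ℤˣ, θ ^ tiltDepth α η z * θ ^ (α * (η m.1 * (m.2 : ℤ)) - 1) +
          (1 - p) * (θ ^ tiltDepth α η z * θ)
        = θ ^ tiltDepth α η z *
            (∑ m : Fin d × ℤˣ, θ ^ (α * (η m.1 * (m.2 : ℤ)) - 1) + (1 - p) * θ) := by
          rw [mul_add, Finset.mul_sum]; ring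
      _ ≤ θ ^ tiltDepth α η z * 1 := by
          gcongr
          linarith [sum_rpow_tiltDepth_step_le hα hθ.le hη]
      _ = θ ^ tiltDepth α η z := mul_one _

lemma ae_forall_mem_le_of_tsum_ne_top {Ω : Type*} [MeasurableSpace Ω] {P : Measure Ω}
    {R : Ω → Set ℤ} (hR : ∑' m : ℕ, P {ω | (m : ℤ) ∈ R ω} ≠ ⊤) :
    ∀ᵐ ω ∂P, ∃ H : ℤ, ∀ h ∈ R ω, h ≤ H := by
  filter_upwards [ae_eventually_notMem hR] with ω hω
  obtain ⟨H, hH⟩ := eventually_atTop.1 hω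
  refine ⟨H, fun h hh => not_lt.1 fun hlt => hH h.toNat (by omega) ?_⟩
  rwa [Int.toNat_of_nonneg (by omega)]

lemma measure_LIP_eq_one {θ p : ℝ} (hα : 0 ≤ α) (hθ : 1 < θ) (hp : p ≤ 1) (hη : IsSign η)
    {P : Measure (Config d)} (hP : IsBernoulli p P)
    (h : tiltDim η * θ ^ (α - 1) + 2 * d * θ⁻¹ + (1 - p) * θ ≤ 1) : P (LIP α η) = 1 := by
  have := hP.1
  have hθ0 : 0 < θ := by linarith
  have hbdd (x : Fin d → ℤ) : ∀ᵐ ω ∂P, ∃ H : ℤ, ∀ h : ℤ,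
      Fin.snoc x h ∈ reachable siteStep siteBelow (siteHypograph (planeHt α η)) ω → h ≤ H := by
    refine ae_forall_mem_le_of_tsum_ne_top (R := fun ω => {h : ℤ | Fin.snoc x h ∈
      reachable siteStep siteBelow (siteHypograph (planeHt α η)) ω}) ?_
    have hpow (m : ℕ) : θ ^ tiltDepth α η (Fin.snoc x (m : ℤ)) =
        θ ^ (α * ∑ i, (η i : ℝ) * x i) * θ⁻¹ ^ m := by
      rw [tiltDepth_snoc, Real.rpow_sub hθ0, div_eq_mul_inv, inv_pow, Int.cast_natCast,
        Real.rpow_natCast]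
    have hsummable : Summable fun m : ℕ => θ ^ tiltDepth α η (Fin.snoc x (m : ℤ)) := by
      simp only [hpow]
      exact (summable_geometric_of_lt_one (by positivity) (inv_lt_one_of_one_lt₀ hθ)).mul_left _
    refine ne_top_of_le_ne_top hsummable.tsum_ofReal_ne_top (ENNReal.tsum_le_tsum fun m => ?_)
    exact measure_mem_reachable_le_rpow hα hθ hp hη hP h _
  have hLIP : ∀ᵐ ω ∂P, ω ∈ LIP α η := by
    filter_upwards [ae_all_iff.2 hbdd] with ω hω
    exact exists_isLipschitzFn_of_forall_bddAbove hω
  exact (measure_congr (eventuallyEq_univ.2 hLIP)).trans measure_univ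

end Tilt

section Walk

open scoped BigOperators

lemma expect_fin_succ_fun {κ : Type*} [Fintype κ] {n : ℕ} (f : (Fin (n + 1) → κ) → ℝ) :
    𝔼 I, f I = 𝔼 a, 𝔼 I : Fin n → κ, f (Fin.cons a I) := by
  rw [← Finset.expect_product', Finset.univ_product_univ]
  exact (Fintype.expect_equiv (Fin.consEquiv fun _ => κ) _ _ fun _ => rfl).symm

section WalkPos

variable {κ : Type*} [DecidableEq κ]

/-- The position after `t` steps of the directed walk on `ℤ^κ` that moves along the coordinate
directions `I 0, I 1, …`. -/
def walkPos {n : ℕ} (I : Fin n → κ) (t : ℕ) : κ → ℤ :=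
  ∑ i : Fin n, if (i : ℕ) < t then Pi.single (I i) 1 else 0

lemma walkPos_zero {n : ℕ} (I : Fin n → κ) : walkPos I 0 = 0 := by simp [walkPos]

lemma walkPos_cons {n : ℕ} (a : κ) (I : Fin n → κ) (t : ℕ) :
    walkPos (Fin.cons a I : Fin (n + 1) → κ) (t + 1) = Pi.single a 1 + walkPos I t := by
  simp [walkPos, Fin.sum_univ_succ]

lemma walkPos_succ {n : ℕ} (I : Fin n → κ) {t : ℕ} (ht : t < n) :
    walkPos I (t + 1) = walkPos I t + Pi.single (I ⟨t, ht⟩) 1 := by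
  have hsplit (i : Fin n) : (if (i : ℕ) < t + 1 then (Pi.single (I i) 1 : κ → ℤ) else 0) =
      (if (i : ℕ) < t then Pi.single (I i) 1 else 0) +
        if i = ⟨t, ht⟩ then Pi.single (I i) 1 else 0 := by
    rcases lt_trichotomy (i : ℕ) t with hi | rfl | hi
    · simp [Fin.ext_iff, hi, hi.le, hi.ne]
    · simp
    · simp [Fin.ext_iff, hi.ne', hi.not_gt, hi.not_ge]
  simp only [walkPos, hsplit, Finset.sum_add_distrib, Finset.sum_ite_eq', Finset.mem_univ,
    if_true]

lemma sum_walkPos [Fintype κ] {n : ℕ} (I : Fin n → κ) {t : ℕ} (ht : t ≤ n) :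
    ∑ a, walkPos I t a = t := by
  induction t with
  | zero => simp [walkPos_zero]
  | succ t ih =>
    simp [walkPos_succ I ht, Finset.sum_add_distrib, ih (Nat.le_of_succ_le ht)]

end WalkPos

variable {κ : Type*} [Fintype κ] [DecidableEq κ]

/-- The probability that the uniform directed walk on `ℤ^κ` is at `w` after `n` steps. -/
noncomputable def walkProb (n : ℕ) (w : κ → ℤ) : ℝ :=
  𝔼 I : Fin n → κ, if walkPos I n = w then 1 else 0

lemma walkProb_zero (w : κ → ℤ) : walkProb 0 w = if w = 0 then 1 else 0 := by
  simp [walkProb, walkPos_zero, eq_comm]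

lemma walkProb_succ (n : ℕ) (w : κ → ℤ) :
    walkProb (n + 1) w = 𝔼 a, walkProb n (w - Pi.single a 1) := by
  simp only [walkProb, expect_fin_succ_fun, walkPos_cons, eq_sub_iff_add_eq']

lemma walkProb_nonneg (n : ℕ) (w : κ → ℤ) : 0 ≤ walkProb n w :=
  Finset.expect_nonneg fun I _ => by split_ifs <;> simp

lemma sum_eq_of_walkProb_ne_zero {n : ℕ} {w : κ → ℤ} (h : walkProb n w ≠ 0) : ∑ a, w a = n := by
  obtain ⟨I, -, hI⟩ := Finset.exists_ne_zero_of_expect_ne_zero h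
  rw [← (ite_ne_right_iff.1 hI).1, sum_walkPos I le_rfl]

lemma apply_mul_walkProb_succ (n : ℕ) (w : κ → ℤ) (a : κ) :
    w a * walkProb (n + 1) w =
      (n + 1) * (Fintype.card κ : ℝ)⁻¹ * walkProb n (w - Pi.single a 1) := by
  have hrec (n : ℕ) (w : κ → ℤ) : w a * walkProb (n + 1) w =
      (𝔼 b, ((w - Pi.single b 1 : κ → ℤ) a : ℝ) * walkProb n (w - Pi.single b 1)) +
        (Fintype.card κ : ℝ)⁻¹ * walkProb n (w - Pi.single a 1) := by
    have hite : (Fintype.card κ : ℝ)⁻¹ * walkProb n (w - Pi.single a 1) =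
        𝔼 b, if a = b then walkProb n (w - Pi.single b 1) else 0 := by
      rw [Fintype.expect_eq_sum_div_card, Finset.sum_ite_eq, if_pos (Finset.mem_univ a),
        div_eq_inv_mul]
    rw [walkProb_succ, Finset.mul_expect, hite, ← Finset.expect_add_distrib]
    refine Finset.expect_congr rfl fun b _ => ?_
    obtain rfl | hab := eq_or_ne a b
    · simp [sub_mul]
    · simp [hab]
  induction n generalizing w with
  | zero =>
    have hzero (v : κ → ℤ) : v a * walkProb 0 v = 0 := by
      rw [walkProb_zero]
      split_ifs with hv <;> simp [hv]
    rw [hrec, Finset.expect_eq_zero fun b _ => hzero _]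
    simp
  | succ n ih =>
    rw [hrec, walkProb_succ n (w - _), Finset.expect_congr rfl fun b _ => ih _,
      ← Finset.mul_expect]
    simp only [sub_right_comm w _ (Pi.single a 1)]
    push_cast
    ring

end Walk

section Mode

variable {k : ℕ}

/-- The probability of the mode of the multinomial distribution with `n` trials and `k` equally
likely outcomes, as a product over the trials: the `i`-th trial raises an occupation number from
`i / k` to `i / k + 1`. -/
noncomputable def modeProb (k n : ℕ) : ℝ :=
  ∏ i ∈ Finset.range n, ((i : ℝ) + 1) / (k * ((i / k : ℕ) + 1))

lemma modeProb_succ (n : ℕ) :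
    modeProb k (n + 1) = modeProb k n * (((n : ℝ) + 1) / (k * ((n / k : ℕ) + 1))) :=
  Finset.prod_range_succ _ _

lemma modeProb_nonneg (k n : ℕ) : 0 ≤ modeProb k n :=
  Finset.prod_nonneg fun i _ => by positivity

-- By pigeonhole some coordinate of `w` exceeds `n / k`; remove a step in that direction.
lemma walkProb_le_modeProb {κ : Type*} [Fintype κ] [DecidableEq κ] (n : ℕ) (w : κ → ℤ) :
    walkProb n w ≤ modeProb (Fintype.card κ) n := by
  induction n generalizing w with
  | zero =>
    rw [walkProb_zero]
    split_ifs <;> simp [modeProb]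
  | succ n ih =>
    by_cases h0 : walkProb (n + 1) w = 0
    · exact h0.trans_le (modeProb_nonneg _ _)
    set k := Fintype.card κ with hk_def
    obtain ⟨a, ha⟩ : ∃ a, ((n / k : ℕ) : ℤ) + 1 ≤ w a := by
      by_contra! hlt
      have hsum : ((n + 1 : ℕ) : ℤ) ≤ ∑ _a : κ, ((n / k : ℕ) : ℤ) := by
        rw [← sum_eq_of_walkProb_ne_zero h0]
        exact Finset.sum_le_sum fun a _ => Int.lt_add_one_iff.1 (hlt a)
      rw [Finset.sum_const, Finset.card_univ, nsmul_eq_mul] at hsum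
      have hle : n + 1 ≤ k * (n / k) := by exact_mod_cast hsum
      exact absurd hle (Nat.mul_div_le n k).not_gt
    have ha' : ((n / k : ℕ) : ℝ) + 1 ≤ w a := by
      generalize n / k = m at ha ⊢
      exact_mod_cast ha
    have hk : (0 : ℝ) < k := Nat.cast_pos.2 (Fintype.card_pos_iff.2 ⟨a⟩)
    rw [modeProb_succ, mul_div_assoc', le_div_iff₀ (by positivity)]
    calc walkProb (n + 1) w * (k * (((n / k : ℕ) : ℝ) + 1))
        ≤ walkProb (n + 1) w * (k * w a) := by
          gcongr
          exact walkProb_nonneg _ _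
      _ = k * (w a * walkProb (n + 1) w) := by ring
      _ = (n + 1) * walkProb n (w - Pi.single a 1) := by
          rw [apply_mul_walkProb_succ, ← hk_def]
          field_simp
      _ ≤ (n + 1) * modeProb k n := by gcongr; exact ih _
      _ = modeProb k n * (n + 1) := mul_comm _ _

lemma modeProb_antitone (hk : 0 < k) : Antitone (modeProb k) := by
  refine antitone_nat_of_succ_le fun n => ?_
  rw [modeProb_succ]
  refine mul_le_of_le_one_right (modeProb_nonneg _ _) ?_
  rw [div_le_one (by positivity)]
  exact_mod_cast Nat.lt_mul_div_succ n hk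

lemma modeProb_mul_pow_le_factorial (k n : ℕ) : modeProb k n * (k : ℝ) ^ n ≤ n.factorial := by
  calc modeProb k n * (k : ℝ) ^ n
      = ∏ i ∈ Finset.range n, ((i : ℝ) + 1) / (k * ((i / k : ℕ) + 1)) * k := by
        rw [Finset.prod_mul_distrib, Finset.prod_const, Finset.card_range, modeProb]
    _ ≤ ∏ i ∈ Finset.range n, ((i + 1 : ℕ) : ℝ) := by
        refine Finset.prod_le_prod (fun i _ => by positivity) fun i _ => ?_
        rw [div_mul_eq_mul_div, Nat.cast_succ]
        refine div_le_of_le_mul₀ (by positivity) (by positivity) ?_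
        gcongr
        exact le_mul_of_one_le_right k.cast_nonneg (le_add_of_nonneg_left (Nat.cast_nonneg _))
    _ = n.factorial := by rw [← Nat.cast_prod, Finset.prod_range_add_one_eq_factorial]

lemma one_sub_pow_le {y : ℝ} (hy0 : 0 ≤ y) (hy1 : y ≤ 1) (n : ℕ) :
    (1 - y) ^ n ≤ 1 / (1 + n * y) := by
  rw [le_div_iff₀ (by positivity)]
  calc (1 - y) ^ n * (1 + n * y) ≤ (1 - y) ^ n * (1 + y) ^ n := by
        gcongr
        exact one_add_mul_le_pow (by linarith) n
    _ = (1 - y ^ 2) ^ n := by rw [← mul_pow]; ring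
    _ ≤ 1 := pow_le_one₀ (by nlinarith) (by nlinarith)

lemma modeProb_mul_add_four_le (hk : 8 ≤ k) (R : ℕ) :
    modeProb k (k * R + 4) ≤ modeProb k (k * R) * (1 - 1 / (2 * (R + 1))) ^ 4 := by
  have hkR : (8 : ℝ) ≤ k := by exact_mod_cast hk
  have hfactor : ∀ t ∈ Finset.range 4,
      (((k * R + t : ℕ) : ℝ) + 1) / (k * (((k * R + t) / k : ℕ) + 1)) ≤
        1 - 1 / (2 * (R + 1)) := fun t ht => by
    rw [Finset.mem_range] at ht
    rw [Nat.mul_add_div (by omega), Nat.div_eq_of_lt (by omega), add_zero,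
      div_le_iff₀ (by positivity)]
    have ht' : (t : ℝ) + 1 ≤ 4 := by exact_mod_cast ht
    calc ((k * R + t : ℕ) : ℝ) + 1 ≤ k * R + k / 2 := by push_cast; linarith
      _ = (1 - 1 / (2 * (R + 1))) * (k * (R + 1)) := by field_simp; ring
  rw [modeProb, Finset.prod_range_add]
  refine mul_le_mul_of_nonneg_left ?_ (modeProb_nonneg _ _)
  simpa using Finset.prod_le_prod (fun t _ => by positivity) hfactor

lemma modeProb_mul_succ_le (hk : 8 ≤ k) (R : ℕ) :
    modeProb k (k * (R + 1)) ≤ modeProb k (k * R) * ((R + 1) / (R + 3)) := by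
  have hy : 1 / (2 * ((R : ℝ) + 1)) ≤ 1 := by
    rw [div_le_one (by positivity)]
    linarith [R.cast_nonneg (α := ℝ)]
  calc modeProb k (k * (R + 1)) ≤ modeProb k (k * R + 4) :=
        modeProb_antitone (by omega) (by rw [mul_add]; omega)
    _ ≤ modeProb k (k * R) * (1 - 1 / (2 * (R + 1))) ^ 4 := modeProb_mul_add_four_le hk R
    _ ≤ modeProb k (k * R) * (1 / (1 + (4 : ℕ) * (1 / (2 * (R + 1))))) :=
        mul_le_mul_of_nonneg_left (one_sub_pow_le (by positivity) hy 4) (modeProb_nonneg _ _)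
    _ = modeProb k (k * R) * ((R + 1) / (R + 3)) := by
        congr 1
        push_cast
        field_simp
        ring

lemma modeProb_mul_le (hk : 8 ≤ k) {R : ℕ} (hR : 1 ≤ R) :
    modeProb k (k * R) ≤ modeProb k k * (6 / ((R + 1) * (R + 2))) := by
  induction R, hR using Nat.le_induction with
  | base => norm_num
  | succ R hR ih =>
    calc modeProb k (k * (R + 1)) ≤ modeProb k (k * R) * ((R + 1) / (R + 3)) :=
          modeProb_mul_succ_le hk R
      _ ≤ modeProb k k * (6 / ((R + 1) * (R + 2))) * ((R + 1) / (R + 3)) := by gcongr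
      _ = modeProb k k * (6 / (((R + 1 : ℕ) + 1) * ((R + 1 : ℕ) + 2))) := by
          push_cast
          field_simp
          ring

lemma modeProb_le_of_le (hk : 8 ≤ k) {T s : ℕ} (hT : T ≤ k) (hs : T ≤ s) :
    modeProb k s ≤ modeProb k T * (6 / (((s / k : ℕ) + 1) * ((s / k : ℕ) + 2))) := by
  have hanti : Antitone (modeProb k) := modeProb_antitone (by omega)
  rcases Nat.eq_zero_or_pos (s / k) with h | h
  · rw [h]
    norm_num
    linarith [hanti hs, modeProb_nonneg k T]
  · calc modeProb k s ≤ modeProb k (k * (s / k)) := hanti (Nat.mul_div_le s k)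
      _ ≤ modeProb k k * (6 / (((s / k : ℕ) + 1) * ((s / k : ℕ) + 2))) := modeProb_mul_le hk h
      _ ≤ modeProb k T * (6 / (((s / k : ℕ) + 1) * ((s / k : ℕ) + 2))) := by
          gcongr
          exact hanti hT

lemma sum_range_mul_div_div_le (c : ℝ) (hc : 0 ≤ c) (hk : 0 < k) (n : ℕ) :
    ∑ s ∈ Finset.range (k * n), c / (((s / k : ℕ) + 1) * ((s / k : ℕ) + 2)) ≤ c * k := by
  suffices h : ∑ s ∈ Finset.range (k * n), c / (((s / k : ℕ) + 1) * ((s / k : ℕ) + 2)) =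
      c * k * (1 - 1 / (n + 1)) by
    rw [h]
    exact mul_le_of_le_one_right (by positivity) (sub_le_self _ (by positivity))
  induction n with
  | zero => simp
  | succ n ih =>
    have hblock : ∀ t ∈ Finset.range k,
        c / ((((k * n + t) / k : ℕ) + 1) * (((k * n + t) / k : ℕ) + 2)) =
          c / ((n + 1) * (n + 2)) := fun t ht => by
      rw [Nat.mul_add_div hk, Nat.div_eq_of_lt (Finset.mem_range.1 ht), add_zero]
    rw [mul_add, mul_one, Finset.sum_range_add, ih, Finset.sum_congr rfl hblock,
      Finset.sum_const, Finset.card_range, nsmul_eq_mul]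
    push_cast
    field_simp
    ring

lemma sum_Ico_modeProb_le (hk : 8 ≤ k) {T : ℕ} (hT : T ≤ k) (n : ℕ) :
    ∑ s ∈ Finset.Ico T n, modeProb k s ≤ modeProb k T * (6 * k) := by
  have hm := modeProb_nonneg k T
  calc ∑ s ∈ Finset.Ico T n, modeProb k s
      ≤ ∑ s ∈ Finset.Ico T n, modeProb k T * (6 / (((s / k : ℕ) + 1) * ((s / k : ℕ) + 2))) :=
        Finset.sum_le_sum fun s hs => modeProb_le_of_le hk hT (Finset.mem_Ico.1 hs).1
    _ ≤ ∑ s ∈ Finset.range (k * n), modeProb k T *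
          (6 / (((s / k : ℕ) + 1) * ((s / k : ℕ) + 2))) := by
        refine Finset.sum_le_sum_of_subset_of_nonneg (fun s hs => ?_) fun s _ _ => by positivity
        exact Finset.mem_range.2 <| (Finset.mem_Ico.1 hs).2.trans_le <|
          Nat.le_mul_of_pos_left n (by omega)
    _ = modeProb k T * ∑ s ∈ Finset.range (k * n),
          (6 : ℝ) / (((s / k : ℕ) + 1) * ((s / k : ℕ) + 2)) := (Finset.mul_sum ..).symm
    _ ≤ modeProb k T * (6 * k) := by
        gcongr
        exact sum_range_mul_div_div_le 6 (by norm_num) (by omega) n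

/-- A bound for the weighted collision sum of two directed walks that does not depend on the
dimension. -/
noncomputable def collisionConst (T : ℕ) : ℝ :=
  ∑ s ∈ Finset.range T, (s.factorial : ℝ) + 6 * T.factorial

lemma sum_Ico_modeProb_mul_rpow_le (hk : 8 ≤ k) {g : ℝ} {T : ℕ} (hT : T ≤ k) (hg : g + 2 ≤ T)
    (n : ℕ) : ∑ s ∈ Finset.Ico T n, modeProb k s * (k : ℝ) ^ (g + 1) ≤ 6 * T.factorial := by
  have hk1 : (1 : ℝ) ≤ k := by exact_mod_cast (by omega : 1 ≤ k)
  have hm := modeProb_nonneg k T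
  calc ∑ s ∈ Finset.Ico T n, modeProb k s * (k : ℝ) ^ (g + 1)
      ≤ modeProb k T * (6 * k) * (k : ℝ) ^ (g + 1) := by
        rw [← Finset.sum_mul]
        gcongr
        exact sum_Ico_modeProb_le hk hT n
    _ = 6 * (modeProb k T * (k : ℝ) ^ (g + 2)) := by
        rw [show g + 2 = (g + 1) + 1 by ring, Real.rpow_add (by linarith) (g + 1) 1,
          Real.rpow_one]
        ring
    _ ≤ 6 * (modeProb k T * (k : ℝ) ^ T) := by
        gcongr
        rw [← Real.rpow_natCast]
        exact Real.rpow_le_rpow_of_exponent_le hk1 hg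
    _ ≤ 6 * T.factorial := by gcongr; exact modeProb_mul_pow_le_factorial k T

lemma sum_modeProb_mul_rpow_le_collisionConst (hk : 8 ≤ k) {g : ℝ} {T : ℕ} (hT : T ≤ k)
    (hg : g + 2 ≤ T) (n : ℕ) :
    ∑ s ∈ Finset.range n, modeProb k s * (k : ℝ) ^ min (s : ℝ) (g + 1) ≤ collisionConst T := by
  have hk1 : (1 : ℝ) ≤ k := by exact_mod_cast (by omega : 1 ≤ k)
  have hm := modeProb_nonneg k
  calc ∑ s ∈ Finset.range n, modeProb k s * (k : ℝ) ^ min (s : ℝ) (g + 1)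
      ≤ ∑ s ∈ Finset.range T ∪ Finset.Ico T n, modeProb k s * (k : ℝ) ^ min (s : ℝ) (g + 1) := by
        refine Finset.sum_le_sum_of_subset_of_nonneg (fun s hs => ?_) fun s _ _ =>
          mul_nonneg (hm s) (by positivity)
        simp only [Finset.mem_union, Finset.mem_range, Finset.mem_Ico] at *
        omega
    _ = ∑ s ∈ Finset.range T, modeProb k s * (k : ℝ) ^ min (s : ℝ) (g + 1) +
          ∑ s ∈ Finset.Ico T n, modeProb k s * (k : ℝ) ^ min (s : ℝ) (g + 1) := by
        refine Finset.sum_union (Finset.disjoint_left.2 fun s hs hs' => ?_)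
        exact absurd (Finset.mem_range.1 hs) (Finset.mem_Ico.1 hs').1.not_gt
    _ ≤ ∑ s ∈ Finset.range T, modeProb k s * (k : ℝ) ^ s +
          ∑ s ∈ Finset.Ico T n, modeProb k s * (k : ℝ) ^ (g + 1) := by
        refine add_le_add (Finset.sum_le_sum fun s _ => ?_) (Finset.sum_le_sum fun s _ => ?_)
        · rw [← Real.rpow_natCast]
          exact mul_le_mul_of_nonneg_left
            (Real.rpow_le_rpow_of_exponent_le hk1 (min_le_left _ _)) (hm s)
        · exact mul_le_mul_of_nonneg_left
            (Real.rpow_le_rpow_of_exponent_le hk1 (min_le_right _ _)) (hm s)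
    _ ≤ collisionConst T :=
        add_le_add (Finset.sum_le_sum fun s _ => modeProb_mul_pow_le_factorial k s)
          (sum_Ico_modeProb_mul_rpow_le hk hT hg n)

end Mode

section Meeting

open scoped BigOperators

variable {κ : Type*} [Fintype κ] [DecidableEq κ]

/-- The expectation, over the first `n` steps of the uniform directed walk, of the product of the
weights `L t` over the times `1 ≤ t ≤ n` at which the walk meets the moving target `y`. -/
noncomputable def meetExp (L : ℕ → ℝ) (y : ℕ → κ → ℤ) (n : ℕ) : ℝ :=
  𝔼 I : Fin n → κ, ∏ s ∈ Finset.range n, if walkPos I (s + 1) = y (s + 1) then L (s + 1) else 1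

lemma meetExp_succ (L : ℕ → ℝ) (y : ℕ → κ → ℤ) (n : ℕ) :
    meetExp L y (n + 1) = 𝔼 a : κ, (if Pi.single a 1 = y 1 then L 1 else 1) *
      meetExp (fun t => L (t + 1)) (fun t => y (t + 1) - Pi.single a 1) n := by
  simp only [meetExp, expect_fin_succ_fun, Finset.prod_range_succ' _ n, walkPos_cons,
    walkPos_zero, add_zero, zero_add, Finset.mul_expect, eq_sub_iff_add_eq', mul_comm]

lemma sum_mul_walkProb_le {b : ℕ → ℝ} (hb : ∀ s, 0 ≤ b s) (w : ℕ → κ → ℤ) (n : ℕ) :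
    ∑ s ∈ Finset.range n, b s * walkProb (s + 1) (w s) ≤
      ∑ s ∈ Finset.range n, b s * modeProb (Fintype.card κ) (s + 1) :=
  Finset.sum_le_sum fun s _ => mul_le_mul_of_nonneg_left (walkProb_le_modeProb _ _) (hb s)

-- `B` is a supersolution of the renewal inequality satisfied by the meeting times.
lemma meetExp_le [Nonempty κ] {L B : ℕ → ℝ} (hL : ∀ t, 1 ≤ L t) (hB0 : ∀ t, 0 ≤ B t)
    (hB : ∀ t r, (L t - 1) * (1 + ∑ s ∈ Finset.range r,
      B (t + s + 1) * modeProb (Fintype.card κ) (s + 1)) ≤ B t)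
    (y : ℕ → κ → ℤ) (n : ℕ) :
    meetExp L y n ≤ 1 + ∑ s ∈ Finset.range n, B (s + 1) * walkProb (s + 1) (y (s + 1)) := by
  induction n generalizing L B y with
  | zero => simp [meetExp]
  | succ n ih =>
    have hih (a : κ) := ih (fun t => hL (t + 1)) (fun t => hB0 (t + 1))
      (fun t r => by simpa only [add_right_comm] using hB (t + 1) r)
      fun t => y (t + 1) - Pi.single a 1
    have hstep (a : κ) : (if Pi.single a 1 = y 1 then L 1 else 1) *
        meetExp (fun t => L (t + 1)) (fun t => y (t + 1) - Pi.single a 1) n ≤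
          1 + ∑ s ∈ Finset.range (n + 1), B (s + 1) * walkProb s (y (s + 1) - Pi.single a 1) := by
      rw [Finset.sum_range_succ', ← add_assoc, walkProb_zero]
      by_cases hmeet : Pi.single a 1 = y 1
      · rw [if_pos hmeet, if_pos (sub_eq_zero.2 hmeet.symm), mul_one]
        set W := ∑ s ∈ Finset.range n,
          B (s + 1 + 1) * walkProb (s + 1) (y (s + 1 + 1) - Pi.single a 1)
        have hmode : W ≤ ∑ s ∈ Finset.range n,
            B (1 + s + 1) * modeProb (Fintype.card κ) (s + 1) := by
          simpa only [add_comm 1] using sum_mul_walkProb_le (fun s => hB0 (s + 1 + 1)) _ n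
        have hL1 : 0 ≤ L 1 - 1 := sub_nonneg.2 (hL 1)
        calc L 1 * meetExp (fun t => L (t + 1)) (fun t => y (t + 1) - Pi.single a 1) n
            ≤ L 1 * (1 + W) := mul_le_mul_of_nonneg_left (hih a) (by linarith)
          _ = 1 + W + (L 1 - 1) * (1 + W) := by ring
          _ ≤ 1 + W + (L 1 - 1) * (1 + ∑ s ∈ Finset.range n,
                B (1 + s + 1) * modeProb (Fintype.card κ) (s + 1)) := by gcongr
          _ ≤ 1 + W + B 1 := by gcongr; exact hB 1 n
      · rw [if_neg hmeet, if_neg (sub_ne_zero.2 (Ne.symm hmeet)), one_mul, mul_zero, add_zero]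
        exact hih a
    rw [meetExp_succ]
    refine (Finset.expect_le_expect fun a _ => hstep a).trans_eq ?_
    simp only [Finset.expect_add_distrib, Fintype.expect_const, Finset.expect_sum_comm,
      ← Finset.mul_expect, walkProb_succ]

end Meeting

section SecondMoment

variable {Ω ι : Type*} [Fintype ι]

lemma sum_sum_indicator_inter_one (E : ι → Set Ω) (ω : Ω) :
    ∑ i, ∑ j, (E i ∩ E j).indicator (1 : Ω → ℝ) ω = (∑ i, (E i).indicator 1 ω) ^ 2 := by
  simp only [Set.inter_indicator_one, Pi.mul_apply, sq, Finset.sum_mul_sum]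

variable [MeasurableSpace Ω] {E : ι → Set Ω} {P : Measure Ω} [IsFiniteMeasure P]

lemma integrable_sum_indicator_one (hE : ∀ i, MeasurableSet (E i)) :
    Integrable (fun ω => ∑ i, (E i).indicator (1 : Ω → ℝ) ω) P :=
  integrable_finsetSum _ fun i _ => (integrable_const 1).indicator (hE i)

lemma integral_sum_indicator_one (hE : ∀ i, MeasurableSet (E i)) :
    ∫ ω, ∑ i, (E i).indicator (1 : Ω → ℝ) ω ∂P = ∑ i, P.real (E i) := by
  rw [integral_finsetSum _ fun i _ => (integrable_const 1).indicator (hE i)]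
  exact Finset.sum_congr rfl fun i _ => integral_indicator_one (hE i)

lemma integrable_sq_sum_indicator_one (hE : ∀ i, MeasurableSet (E i)) :
    Integrable (fun ω => (∑ i, (E i).indicator (1 : Ω → ℝ) ω) ^ 2) P := by
  simp only [← sum_sum_indicator_inter_one]
  exact integrable_finsetSum _ fun i _ =>
    integrable_sum_indicator_one fun j => (hE i).inter (hE j)

lemma integral_sq_sum_indicator_one (hE : ∀ i, MeasurableSet (E i)) :
    ∫ ω, (∑ i, (E i).indicator (1 : Ω → ℝ) ω) ^ 2 ∂P = ∑ i, ∑ j, P.real (E i ∩ E j) := by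
  simp only [← sum_sum_indicator_inter_one]
  rw [integral_finsetSum _ fun i _ =>
    integrable_sum_indicator_one fun j => (hE i).inter (hE j)]
  exact Finset.sum_congr rfl fun i _ =>
    integral_sum_indicator_one fun j => (hE i).inter (hE j)

/-- The Chung–Erdős inequality. -/
lemma sq_sum_measureReal_le (hE : ∀ i, MeasurableSet (E i)) :
    (∑ i, P.real (E i)) ^ 2 ≤ P.real (⋃ i, E i) * ∑ i, ∑ j, P.real (E i ∩ E j) := by
  let X : Ω → ℝ := fun ω => ∑ i, (E i).indicator 1 ω
  have hX : Integrable X P := integrable_sum_indicator_one hE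
  have hX2 : Integrable (fun ω => X ω ^ 2) P := integrable_sq_sum_indicator_one hE
  have hU : MeasurableSet (⋃ i, E i) := MeasurableSet.iUnion hE
  have hpoint (μ : ℝ) (ω : Ω) :
      X ω * (2 * μ) - X ω ^ 2 * (μ * μ) ≤ (⋃ i, E i).indicator 1 ω := by
    by_cases hω : ω ∈ ⋃ i, E i
    · rw [Set.indicator_of_mem hω, Pi.one_apply]
      nlinarith [sq_nonneg (X ω * μ - 1)]
    · have hXω : X ω = 0 := Finset.sum_eq_zero fun i _ =>
        Set.indicator_of_notMem (fun hi => hω (Set.mem_iUnion.2 ⟨i, hi⟩)) _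
      simp [Set.indicator_of_notMem hω, hXω]
  have hquad (μ : ℝ) : 0 ≤ (∑ i, ∑ j, P.real (E i ∩ E j)) * (μ * μ) +
      (-2 * ∑ i, P.real (E i)) * μ + P.real (⋃ i, E i) := by
    have h := integral_mono ((hX.mul_const _).sub (hX2.mul_const _))
      ((integrable_const 1).indicator hU) (hpoint μ)
    simp only [Pi.sub_apply] at h
    rw [integral_indicator_one hU, integral_sub (hX.mul_const _)
      (hX2.mul_const _), integral_mul_const, integral_mul_const, integral_sum_indicator_one hE,
      integral_sq_sum_indicator_one hE] at h
    linarith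
  have hdiscrim := discrim_le_zero hquad
  rw [discrim] at hdiscrim
  linarith

end SecondMoment

section Probe

variable {d : ℕ} {η : Fin d → ℤ}

/-- The image in `ℤ^d` of a point of `ℤ^{i | η i ≠ 0}`, the coordinate directions pointing uphill
along the tilt `η`. -/
def embedTilt (η : Fin d → ℤ) (x : {i // η i ≠ 0} → ℤ) : Fin d → ℤ :=
  fun i => if h : η i ≠ 0 then η i * x ⟨i, h⟩ else 0

lemma embedTilt_zero (η : Fin d → ℤ) : embedTilt η 0 = 0 := by
  ext i
  simp [embedTilt]

lemma embedTilt_add_single (x : {i // η i ≠ 0} → ℤ) (a : {i // η i ≠ 0}) :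
    embedTilt η (x + Pi.single a 1) = embedTilt η x + Pi.single (a : Fin d) (η a) := by
  ext i
  by_cases hi : η i = 0
  · have hne : i ≠ a := fun h => a.2 (h ▸ hi)
    simp [embedTilt, hi, hne]
  · obtain rfl | hne := eq_or_ne i a
    · simp [embedTilt, hi, mul_add]
    · simp [embedTilt, hi, hne, Subtype.ext_iff]

lemma embedTilt_injective (η : Fin d → ℤ) : Function.Injective (embedTilt η) := fun x y h => by
  ext a
  simpa [embedTilt, a.2] using congrFun h a

lemma IsSign.sum_mul_embedTilt (hη : IsSign η) (x : {i // η i ≠ 0} → ℤ) :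
    ∑ i, η i * embedTilt η x i = ∑ a, x a := by
  refine (Fintype.sum_of_injective Subtype.val Subtype.val_injective _ _ (fun i hi => ?_)
    fun a => ?_).symm
  · have hi0 : η i = 0 := not_not.1 fun h => hi ⟨⟨i, h⟩, rfl⟩
    rw [hi0, zero_mul]
  · rcases hη a with h | h | h
    · simp [embedTilt, h]
    · exact absurd h a.2
    · simp [embedTilt, h]

lemma IsLipschitzFn.apply_embedTilt_add_single_le {F : (Fin d → ℤ) → ℤ} (hF : IsLipschitzFn F)
    (hη : IsSign η) (x : {i // η i ≠ 0} → ℤ) (a : {i // η i ≠ 0}) :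
    F (embedTilt η (x + Pi.single a 1)) ≤ F (embedTilt η x) + 1 := by
  rw [embedTilt_add_single]
  rcases hη a with h | h | h
  · simpa [h] using isLipschitzFn_iff_forall_add_single.1 hF (embedTilt η x) a (-1)
  · exact absurd h a.2
  · simpa [h] using isLipschitzFn_iff_forall_add_single.1 hF (embedTilt η x) a 1

variable {A : Finset ℕ} {h : ℤ} {n : ℕ}

/-- The site probed at time `t` by the walk with steps `I` that starts above the origin at height
`h`, climbs by one at each step, and has descended by one at each earlier time of `A`. -/
def probeSite (η : Fin d → ℤ) (A : Finset ℕ) (h : ℤ) (I : Fin n → {i // η i ≠ 0}) (t : ℕ) :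
    Site d :=
  Fin.snoc (embedTilt η (walkPos I t)) (h + t - Nat.count (· ∈ A) t)

/-- The sites that have to be closed for the walk with steps `I` to descend at all the times
of `A`. -/
def probeSites (η : Fin d → ℤ) (A : Finset ℕ) (h : ℤ) (I : Fin n → {i // η i ≠ 0}) :
    Finset (Site d) :=
  A.image (probeSite η A h I)

lemma probeSite_eq_probeSite_iff {I J : Fin n → {i // η i ≠ 0}} {s t : ℕ} (hs : s ≤ n)
    (ht : t ≤ n) :
    probeSite η A h I s = probeSite η A h J t ↔ s = t ∧ walkPos I s = walkPos J s := by
  constructor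
  · intro heq
    have hpos := embedTilt_injective η (Fin.snoc_inj.1 heq).1
    have htime : (s : ℤ) = t := by rw [← sum_walkPos I hs, hpos, sum_walkPos J ht]
    obtain rfl : s = t := by exact_mod_cast htime
    exact ⟨rfl, hpos⟩
  · rintro ⟨rfl, hpos⟩
    rw [probeSite, probeSite, hpos]

lemma injOn_probeSite (hA : A ⊆ Finset.Icc 1 n) (I : Fin n → {i // η i ≠ 0}) :
    Set.InjOn (probeSite η A h I) A := fun _ hs _ ht heq =>
  ((probeSite_eq_probeSite_iff (Finset.mem_Icc.1 (hA hs)).2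
    (Finset.mem_Icc.1 (hA ht)).2).1 heq).1

lemma card_probeSites (hA : A ⊆ Finset.Icc 1 n) (I : Fin n → {i // η i ≠ 0}) :
    (probeSites η A h I).card = A.card :=
  Finset.card_image_of_injOn (injOn_probeSite hA I)

lemma probeSites_inter_probeSites (hA : A ⊆ Finset.Icc 1 n) (I J : Fin n → {i // η i ≠ 0}) :
    probeSites η A h I ∩ probeSites η A h J =
      (A.filter fun t => walkPos J t = walkPos I t).image (probeSite η A h I) := by
  have hle {t : ℕ} (ht : t ∈ A) : t ≤ n := (Finset.mem_Icc.1 (hA ht)).2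
  ext z
  simp only [probeSites, Finset.mem_inter, Finset.mem_image, Finset.mem_filter]
  constructor
  · rintro ⟨⟨s, hs, rfl⟩, t, ht, heq⟩
    obtain ⟨rfl, hpos⟩ := (probeSite_eq_probeSite_iff (hle ht) (hle hs)).1 heq
    exact ⟨t, ⟨ht, hpos⟩, rfl⟩
  · rintro ⟨s, ⟨hs, hpos⟩, rfl⟩
    exact ⟨⟨s, hs, rfl⟩, s, hs,
      (probeSite_eq_probeSite_iff (hle hs) (hle hs)).2 ⟨rfl, hpos⟩⟩

lemma prod_range_ite_ite {M : Type*} [CommMonoid M] (hA : A ⊆ Finset.Icc 1 n) (p : ℕ → Prop)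
    [DecidablePred p] (l : M) :
    ∏ s ∈ Finset.range n, (if p (s + 1) then if s + 1 ∈ A then l else 1 else 1) =
      l ^ (A.filter p).card := by
  have hshift := Finset.prod_Ico_eq_prod_range
    (fun t => if p t then if t ∈ A then l else 1 else 1) 1 (n + 1)
  simp only [Nat.add_sub_cancel, add_comm 1] at hshift
  rw [← hshift]
  simp only [← ite_and]
  rw [← Finset.prod_filter, Finset.prod_const]
  congr 2
  ext t
  simp only [Finset.mem_filter, Finset.mem_Ico, Nat.lt_succ_iff]
  exact ⟨fun ht => ⟨ht.2.2, ht.2.1⟩, fun ht => ⟨Finset.mem_Icc.1 (hA ht.1), ht.2, ht.1⟩⟩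

lemma pow_card_union_probeSites (hA : A ⊆ Finset.Icc 1 n) {q : ℝ} (hq : q ≠ 0)
    (I J : Fin n → {i // η i ≠ 0}) :
    q ^ (probeSites η A h I ∪ probeSites η A h J).card = (q ^ A.card) ^ 2 *
      ∏ s ∈ Finset.range n,
        if walkPos J (s + 1) = walkPos I (s + 1) then if s + 1 ∈ A then q⁻¹ else 1 else 1 := by
  have hcard := Finset.card_union_add_card_inter (probeSites η A h I) (probeSites η A h J)
  rw [card_probeSites hA, card_probeSites hA, probeSites_inter_probeSites hA,
    Finset.card_image_of_injOn ((injOn_probeSite hA I).mono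
      (Finset.coe_subset.2 (Finset.filter_subset _ A)))] at hcard
  rw [prod_range_ite_ite hA (fun t => walkPos J t = walkPos I t), inv_pow, ← div_eq_mul_inv,
    eq_div_iff (pow_ne_zero _ hq), ← pow_add, hcard, ← pow_mul, mul_two]

lemma IsLipschitzFn.apply_embedTilt_walkPos_le {F : (Fin d → ℤ) → ℤ} (hF : IsLipschitzFn F)
    (hη : IsSign η) (hA : A ⊆ Finset.Icc 1 n) {ω : Config d}
    (hopen : ∀ x, ω (Fin.snoc x (F x)) = true) (h0 : F 0 ≤ h) {I : Fin n → {i // η i ≠ 0}}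
    (hclosed : ω ∈ closedOn (probeSites η A h I)) {t : ℕ} (ht : t ≤ n) :
    F (embedTilt η (walkPos I t)) ≤ h + t - Nat.count (· ∈ A) (t + 1) := by
  induction t with
  | zero =>
    have h0A : 0 ∉ A := fun hmem => by simpa using hA hmem
    simpa [walkPos_zero, embedTilt_zero, Nat.count_succ, h0A] using h0
  | succ t ih =>
    have hstep := hF.apply_embedTilt_add_single_le hη (walkPos I t) (I ⟨t, ht⟩)
    rw [← walkPos_succ I ht] at hstep
    have hprev := ih (Nat.le_of_succ_le ht)
    rw [Nat.count_succ _ (t + 1)]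
    split_ifs with hmem
    · have hprobe : ω (probeSite η A h I (t + 1)) = false :=
        hclosed _ (Finset.mem_image_of_mem _ hmem)
      have hne : F (embedTilt η (walkPos I (t + 1))) ≠
          h + (t + 1 : ℕ) - Nat.count (· ∈ A) (t + 1) := fun heq => by
        rw [probeSite, ← heq, hopen] at hprobe
        exact Bool.noConfusion hprobe
      push_cast at *
      omega
    · push_cast
      omega

lemma IsLipschitzFn.notMem_closedOn_probeSites {F : (Fin d → ℤ) → ℤ} (hF : IsLipschitzFn F)
    (hη : IsSign η) {α : ℝ} (hA : A ⊆ Finset.Icc 1 n) (hdescent : (1 - α) * n + h ≤ A.card)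
    {ω : Config d} (hsurface : ∀ x, ω (Fin.snoc x (F x)) = true ∧ planeHt α η x < F x)
    (h0 : F 0 ≤ h) (I : Fin n → {i // η i ≠ 0}) :
    ω ∉ closedOn (probeSites η A h I) := fun hclosed => by
  have hbelow := hF.apply_embedTilt_walkPos_le hη hA (fun x => (hsurface x).1) h0 hclosed le_rfl
  have hcount : Nat.count (· ∈ A) (n + 1) = A.card := by
    rw [Nat.count_eq_card_filter_range, Finset.filter_mem_eq_inter, Finset.inter_eq_right.2]
    exact fun t ht => Finset.mem_range_succ_iff.2 (Finset.mem_Icc.1 (hA ht)).2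
  have hplane := (hsurface (embedTilt η (walkPos I n))).2
  have hsum : ∑ i, (η i : ℝ) * (embedTilt η (walkPos I n) i : ℝ) = n := by
    exact_mod_cast (hη.sum_mul_embedTilt _).trans (sum_walkPos I le_rfl)
  rw [planeHt, hsum, Int.floor_lt] at hplane
  rw [hcount] at hbelow
  have hbelow' : (F (embedTilt η (walkPos I n)) : ℝ) ≤ h + n - A.card := by
    exact_mod_cast hbelow
  linarith

section Measure

variable {p : ℝ} {P : Measure (Config d)}

lemma sum_measureReal_closedOn_inter (hp : p < 1) (hP : IsBernoulli p P)
    (hA : A ⊆ Finset.Icc 1 n) (h : ℤ) (I : Fin n → {i // η i ≠ 0}) :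
    ∑ J : Fin n → {i // η i ≠ 0},
        P.real (closedOn (probeSites η A h I) ∩ closedOn (probeSites η A h J)) =
      ((1 - p) ^ A.card) ^ 2 * (Fintype.card (Fin n → {i // η i ≠ 0}) *
        meetExp (fun t => if t ∈ A then (1 - p)⁻¹ else 1) (walkPos I) n) := by
  simp only [closedOn_inter_closedOn, measureReal_closedOn hp.le hP,
    pow_card_union_probeSites hA (sub_pos.2 hp).ne', ← Finset.mul_sum, meetExp,
    Fintype.card_mul_expect]

lemma half_le_measureReal_iUnion_closedOn [Nonempty {i // η i ≠ 0}] (hp : p < 1)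
    (hP : IsBernoulli p P) (hA : A ⊆ Finset.Icc 1 n) (h : ℤ)
    (hmeet : ∀ y : ℕ → {i // η i ≠ 0} → ℤ,
      meetExp (fun t => if t ∈ A then (1 - p)⁻¹ else 1) y n ≤ 2) :
    1 / 2 ≤ P.real (⋃ I : Fin n → {i // η i ≠ 0}, closedOn (probeSites η A h I)) := by
  have := hP.1
  have hq : 0 < 1 - p := sub_pos.2 hp
  set N := (Fintype.card (Fin n → {i // η i ≠ 0}) : ℝ) with hN
  have hN0 : 0 < N := by
    rw [hN]
    exact_mod_cast Fintype.card_pos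
  have hmoment := sq_sum_measureReal_le (P := P)
    (E := fun I : Fin n → {i // η i ≠ 0} => closedOn (probeSites η A h I))
    fun I => measurableSet_closedOn _
  have hfirst : ∑ I : Fin n → {i // η i ≠ 0}, P.real (closedOn (probeSites η A h I)) =
      N * (1 - p) ^ A.card := by
    simp only [measureReal_closedOn hp.le hP, card_probeSites hA, Finset.sum_const, hN,
      nsmul_eq_mul, Finset.card_univ]
  have hsecond : ∑ I : Fin n → {i // η i ≠ 0}, ∑ J : Fin n → {i // η i ≠ 0},
      P.real (closedOn (probeSites η A h I) ∩ closedOn (probeSites η A h J)) ≤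
        2 * (N * (1 - p) ^ A.card) ^ 2 := by
    calc _ ≤ ∑ _I : Fin n → {i // η i ≠ 0}, ((1 - p) ^ A.card) ^ 2 * (N * 2) := by
          refine Finset.sum_le_sum fun I _ => ?_
          rw [sum_measureReal_closedOn_inter hp hP hA]
          gcongr
          exact hmeet _
      _ = 2 * (N * (1 - p) ^ A.card) ^ 2 := by
          rw [Finset.sum_const, Finset.card_univ, nsmul_eq_mul, ← hN]
          ring
  rw [hfirst] at hmoment
  have hbound := hmoment.trans (mul_le_mul_of_nonneg_left hsecond measureReal_nonneg)
  have hpos : 0 < (N * (1 - p) ^ A.card) ^ 2 := by positivity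
  nlinarith

/-- The event that some open Lipschitz surface above the plane has height at most `h` at the
origin. -/
def lipBelow (α : ℝ) (η : Fin d → ℤ) (h : ℕ) : Set (Config d) :=
  {ω | ∃ F : (Fin d → ℤ) → ℤ, IsLipschitzFn F ∧
    (∀ x, ω (Fin.snoc x (F x)) = true ∧ planeHt α η x < F x) ∧ F 0 ≤ h}

lemma monotone_lipBelow (α : ℝ) (η : Fin d → ℤ) : Monotone (lipBelow α η) :=
  fun _ _ hab _ ⟨F, hF, hsurface, h0⟩ => ⟨F, hF, hsurface, h0.trans (by exact_mod_cast hab)⟩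

lemma LIP_eq_iUnion_lipBelow (α : ℝ) (η : Fin d → ℤ) : LIP α η = ⋃ h, lipBelow α η h := by
  ext ω
  rw [Set.mem_iUnion]
  exact ⟨fun ⟨F, hF, hsurface⟩ => ⟨(F 0).toNat, F, hF, hsurface, Int.self_le_toNat _⟩,
    fun ⟨_, F, hF, hsurface, _⟩ => ⟨F, hF, hsurface⟩⟩

lemma measure_LIP_le_half [Nonempty {i // η i ≠ 0}] (hη : IsSign η) {α : ℝ} (hp : p < 1)
    (hP : IsBernoulli p P)
    (hmeet : ∀ h : ℕ, ∃ (n : ℕ) (A : Finset ℕ), A ⊆ Finset.Icc 1 n ∧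
      (1 - α) * n + h ≤ A.card ∧ ∀ y : ℕ → {i // η i ≠ 0} → ℤ,
        meetExp (fun t => if t ∈ A then (1 - p)⁻¹ else 1) y n ≤ 2) :
    P (LIP α η) ≤ 1 / 2 := by
  have := hP.1
  rw [LIP_eq_iUnion_lipBelow, (monotone_lipBelow α η).measure_iUnion]
  refine iSup_le fun h => ?_
  obtain ⟨n, A, hA, hdescent, hmeet⟩ := hmeet h
  set E := ⋃ I : Fin n → {i // η i ≠ 0}, closedOn (probeSites η A h I)
  have hE_meas : MeasurableSet E := MeasurableSet.iUnion fun I => measurableSet_closedOn _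
  have hsub : lipBelow α η h ⊆ Eᶜ := fun ω ⟨F, hF, hsurface, h0⟩ hω => by
    obtain ⟨I, hI⟩ := Set.mem_iUnion.1 hω
    exact hF.notMem_closedOn_probeSites hη hA (by exact_mod_cast hdescent) hsurface h0 I hI
  refine (measure_mono hsub).trans ?_
  have hcompl : P.real Eᶜ ≤ 1 / 2 := by
    rw [probReal_compl_eq_one_sub hE_meas]
    linarith [half_le_measureReal_iUnion_closedOn hp hP hA h hmeet]
  rw [← ofReal_measureReal]
  refine (ENNReal.ofReal_le_ofReal hcompl).trans_eq ?_
  rw [ENNReal.ofReal_div_of_pos (by norm_num)]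
  simp

end Measure

end Probe

section DescentTimes

/-- The delay of the time `t` with respect to the last multiple of `g` before it. -/
noncomputable def lag (g : ℝ) (t : ℕ) : ℝ := t - g * ⌊(t : ℝ) / g⌋₊

/-- The times at which the probing walks have to descend: once in every stretch of length `g`. -/
noncomputable def descentTimes (g : ℝ) (M : ℕ) : Finset ℕ :=
  (Finset.Icc 1 M).image fun j : ℕ => ⌈g * j⌉₊

variable {g : ℝ}

lemma lag_nonneg (hg : 0 < g) (t : ℕ) : 0 ≤ lag g t := by
  have h := mul_le_mul_of_nonneg_left (Nat.floor_le (by positivity : 0 ≤ (t : ℝ) / g)) hg.le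
  rw [mul_div_cancel₀ _ hg.ne'] at h
  exact sub_nonneg.2 h

lemma lag_ceil (hg : 1 ≤ g) (j : ℕ) : lag g ⌈g * j⌉₊ = ⌈g * j⌉₊ - g * j := by
  have hg0 : 0 < g := by linarith
  have hlow : g * j ≤ ⌈g * j⌉₊ := Nat.le_ceil _
  have hup : (⌈g * j⌉₊ : ℝ) < g * j + 1 := Nat.ceil_lt_add_one (by positivity)
  have hfloor : ⌊(⌈g * j⌉₊ : ℝ) / g⌋₊ = j := by
    rw [Nat.floor_eq_iff (by positivity), le_div_iff₀ hg0, div_lt_iff₀ hg0]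
    constructor <;> linarith
  rw [lag, hfloor]

lemma lag_ceil_le (hg : 1 ≤ g) {i j s : ℕ} (hs : ⌈g * i⌉₊ = ⌈g * j⌉₊ + s + 1) :
    lag g ⌈g * i⌉₊ ≤ lag g ⌈g * j⌉₊ + -g + min ((s + 1 : ℕ) : ℝ) (g + 1) := by
  have hji : (j : ℝ) + 1 ≤ i := by
    have hlt : j < i := by
      by_contra! hle
      have hceil : ⌈g * i⌉₊ ≤ ⌈g * j⌉₊ := Nat.ceil_mono (by gcongr)
      omega
    exact_mod_cast hlt
  have hs' : (⌈g * i⌉₊ : ℝ) = ⌈g * j⌉₊ + (s + 1 : ℕ) := by rw [hs]; push_cast; ring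
  rw [lag_ceil hg, lag_ceil hg]
  rcases min_choice ((s + 1 : ℕ) : ℝ) (g + 1) with h | h <;> rw [h]
  · nlinarith
  · have hup : (⌈g * i⌉₊ : ℝ) < g * i + 1 := Nat.ceil_lt_add_one (by positivity)
    linarith [Nat.le_ceil (g * j)]

lemma strictMono_ceil_mul (hg : 1 ≤ g) : StrictMono fun j : ℕ => ⌈g * j⌉₊ := by
  refine strictMono_nat_of_lt_succ fun j => ?_
  have hup : (⌈g * j⌉₊ : ℝ) < g * j + 1 := Nat.ceil_lt_add_one (by positivity)
  have hlow : g * (j + 1 : ℕ) ≤ ⌈g * (j + 1 : ℕ)⌉₊ := Nat.le_ceil _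
  have hlt : (⌈g * j⌉₊ : ℝ) < ⌈g * (j + 1 : ℕ)⌉₊ := by push_cast at *; linarith
  exact_mod_cast hlt

lemma card_descentTimes (hg : 1 ≤ g) (M : ℕ) : (descentTimes g M).card = M := by
  rw [descentTimes, Finset.card_image_of_injective _ (strictMono_ceil_mul hg).injective,
    Nat.card_Icc, Nat.add_sub_cancel]

lemma descentTimes_subset_Icc (hg : 1 ≤ g) (M : ℕ) :
    descentTimes g M ⊆ Finset.Icc 1 ⌈g * M⌉₊ := by
  refine Finset.image_subset_iff.2 fun j hj => ?_
  obtain ⟨hj1, hjM⟩ := Finset.mem_Icc.1 hj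
  exact Finset.mem_Icc.2
    ⟨hj1.trans ((strictMono_ceil_mul hg).id_le j), (strictMono_ceil_mul hg).monotone hjM⟩

variable {k T : ℕ} {l : ℝ}

/-- A supersolution of the renewal inequality for the meetings of two walks at the descent times,
each meeting being weighted by `l`. -/
noncomputable def renewalBound (k : ℕ) (g l : ℝ) (M t : ℕ) : ℝ :=
  if t ∈ descentTimes g M then l * (2 * (k : ℝ) ^ lag g t) else 0

lemma renewalBound_nonneg (hl : 0 ≤ l) (M t : ℕ) : 0 ≤ renewalBound k g l M t := by
  rw [renewalBound]
  split_ifs <;> positivity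

lemma renewalBound_ceil_add_le (hk : 1 ≤ k) (hg : 1 ≤ g) (hl : 0 ≤ l) (M j s : ℕ) :
    renewalBound k g l M (⌈g * j⌉₊ + s + 1) ≤
      l * (2 * (k : ℝ) ^ lag g ⌈g * j⌉₊) * (k : ℝ) ^ (-g) *
        (k : ℝ) ^ min ((s + 1 : ℕ) : ℝ) (g + 1) := by
  have hk1 : (1 : ℝ) ≤ k := by exact_mod_cast hk
  rw [renewalBound]
  split_ifs with hmem
  · obtain ⟨i, -, hi⟩ := Finset.mem_image.1 hmem
    rw [← hi, mul_assoc l, mul_assoc l, mul_assoc 2, mul_assoc 2,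
      ← Real.rpow_add (by linarith), ← Real.rpow_add (by linarith)]
    gcongr
    exact lag_ceil_le hg hi
  · positivity

lemma one_add_sum_renewalBound_le (hk : 8 ≤ k) (hg : 1 ≤ g) (hT : T ≤ k) (hgT : g + 2 ≤ T)
    (hl : 0 ≤ l) (hlk : 2 * l * collisionConst T ≤ (k : ℝ) ^ g) (M j r : ℕ) :
    1 + ∑ s ∈ Finset.range r, renewalBound k g l M (⌈g * j⌉₊ + s + 1) * modeProb k (s + 1) ≤
      2 * (k : ℝ) ^ lag g ⌈g * j⌉₊ := by
  have hk1 : (1 : ℝ) ≤ k := by exact_mod_cast (by omega : 1 ≤ k)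
  have hkg : 0 < (k : ℝ) ^ g := by positivity
  have hcollision : ∑ s ∈ Finset.range r,
      modeProb k (s + 1) * (k : ℝ) ^ min ((s + 1 : ℕ) : ℝ) (g + 1) ≤ collisionConst T := by
    refine le_trans ?_ (sum_modeProb_mul_rpow_le_collisionConst hk hT hgT (r + 1))
    rw [Finset.sum_range_succ']
    exact le_add_of_nonneg_right (mul_nonneg (modeProb_nonneg k 0) (by positivity))
  set Φ : ℝ := (k : ℝ) ^ lag g ⌈g * j⌉₊
  have hΦ : 1 ≤ Φ := Real.one_le_rpow hk1 (lag_nonneg (by linarith) _)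
  calc 1 + ∑ s ∈ Finset.range r, renewalBound k g l M (⌈g * j⌉₊ + s + 1) * modeProb k (s + 1)
      ≤ Φ + ∑ s ∈ Finset.range r, l * (2 * Φ) * (k : ℝ) ^ (-g) *
          (k : ℝ) ^ min ((s + 1 : ℕ) : ℝ) (g + 1) * modeProb k (s + 1) := by
        gcongr with s
        · exact modeProb_nonneg _ _
        · exact renewalBound_ceil_add_le (by omega) hg hl M j s
    _ = Φ + l * (2 * Φ) * (k : ℝ) ^ (-g) * ∑ s ∈ Finset.range r,
          modeProb k (s + 1) * (k : ℝ) ^ min ((s + 1 : ℕ) : ℝ) (g + 1) := by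
        rw [Finset.mul_sum]
        congr 1
        exact Finset.sum_congr rfl fun s _ => by ring
    _ ≤ Φ + l * (2 * Φ) * (k : ℝ) ^ (-g) * collisionConst T := by gcongr
    _ = Φ + Φ * (2 * l * collisionConst T * ((k : ℝ) ^ g)⁻¹) := by
        rw [Real.rpow_neg k.cast_nonneg]
        ring
    _ ≤ Φ + Φ * 1 := by
        gcongr
        rwa [← div_eq_mul_inv, div_le_one hkg]
    _ = 2 * Φ := by ring

lemma meetExp_descentTimes_le_two {κ : Type*} [Fintype κ] [DecidableEq κ]
    (hk : 8 ≤ Fintype.card κ) (hg : 1 ≤ g) (hT : T ≤ Fintype.card κ) (hgT : g + 2 ≤ T)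
    (hl : 1 ≤ l) (hlk : 2 * l * collisionConst T ≤ (Fintype.card κ : ℝ) ^ g)
    (M n : ℕ) (y : ℕ → κ → ℤ) :
    meetExp (fun t => if t ∈ descentTimes g M then l else 1) y n ≤ 2 := by
  have : Nonempty κ := Fintype.card_pos_iff.1 (by omega)
  have hl0 : 0 ≤ l := by linarith
  have hrenewal := one_add_sum_renewalBound_le hk hg hT hgT hl0 hlk M
  set B := renewalBound (Fintype.card κ) g l M with hB
  have hB0 (t : ℕ) : 0 ≤ B t := renewalBound_nonneg hl0 M t
  have hsuper (t r : ℕ) : ((if t ∈ descentTimes g M then l else 1) - 1) *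
      (1 + ∑ s ∈ Finset.range r, B (t + s + 1) * modeProb (Fintype.card κ) (s + 1)) ≤ B t := by
    rw [hB, renewalBound]
    split_ifs with ht
    · obtain ⟨j, -, rfl⟩ := Finset.mem_image.1 ht
      exact mul_le_mul (by linarith) (hrenewal j r)
        (add_nonneg zero_le_one (Finset.sum_nonneg fun s _ =>
          mul_nonneg (hB0 _) (modeProb_nonneg _ _))) hl0
    · simp
  calc meetExp (fun t => if t ∈ descentTimes g M then l else 1) y n
      ≤ 1 + ∑ s ∈ Finset.range n, B (s + 1) * walkProb (s + 1) (y (s + 1)) :=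
        meetExp_le (fun t => by split_ifs <;> linarith) hB0 hsuper y n
    _ ≤ 1 + ∑ s ∈ Finset.range n, B (s + 1) * modeProb (Fintype.card κ) (s + 1) := by
        gcongr 1 + ?_
        exact sum_mul_walkProb_le (fun s => hB0 (s + 1)) _ n
    _ ≤ 2 := by simpa [lag] using hrenewal 0 n

lemma measure_LIP_le_half_of_collisionConst_le {d : ℕ} {η : Fin d → ℤ} (hη : IsSign η) {α p : ℝ}
    (hα : 0 ≤ α) (hk : 8 ≤ tiltDim η) (hg : 1 ≤ g) (hgα : (1 - α) * g < 1) (hT : T ≤ tiltDim η)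
    (hgT : g + 2 ≤ T) (hp0 : 0 ≤ p) (hp1 : p < 1)
    (hpk : 2 * collisionConst T ≤ (1 - p) * (tiltDim η : ℝ) ^ g)
    {P : Measure (Config d)} (hP : IsBernoulli p P) : P (LIP α η) ≤ 1 / 2 := by
  have hq : 0 < 1 - p := sub_pos.2 hp1
  have : Nonempty {i // η i ≠ 0} := Fintype.card_pos_iff.1 (by rw [tiltDim] at hk; omega)
  refine measure_LIP_le_half hη hp1 hP fun h => ?_
  obtain ⟨M, hM⟩ := exists_nat_ge ((h + 1) / (1 - (1 - α) * g))
  rw [div_le_iff₀ (by linarith)] at hM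
  refine ⟨⌈g * M⌉₊, descentTimes g M, descentTimes_subset_Icc hg M, ?_,
    meetExp_descentTimes_le_two hk hg hT hgT ((one_le_inv₀ hq).2 (by linarith)) ?_ M _⟩
  · rw [card_descentTimes hg]
    have hup : (⌈g * M⌉₊ : ℝ) < g * M + 1 := Nat.ceil_lt_add_one (by positivity)
    have hδ := mul_nonneg hα (sub_nonneg.2 (Nat.le_ceil (g * M)))
    nlinarith
  · rwa [mul_comm (2 : ℝ), mul_assoc, inv_mul_le_iff₀ hq]

end DescentTimes

section CriticalProb

variable {d : ℕ} {η : Fin d → ℤ} {α pc : ℝ} {P : ℝ → Measure (Config d)}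

lemma IsCriticalProb.le_of_measure_LIP_eq_one (hpc : IsCriticalProb P α η pc) {p : ℝ}
    (hp : 0 ≤ p) (h : P p (LIP α η) = 1) : pc ≤ p := by
  by_contra! hlt
  exact one_ne_zero (h.symm.trans (hpc.2.1 p hp hlt))

lemma IsCriticalProb.ge_of_measure_LIP_le_half (hpc : IsCriticalProb P α η pc) {p : ℝ}
    (hp : p ≤ 1) (h : P p (LIP α η) ≤ 1 / 2) : p ≤ pc := by
  by_contra! hlt
  rw [hpc.2.2 p hlt hp] at h
  norm_num at h

lemma IsCriticalProb.mul_inv_le_one_sub (hpc : IsCriticalProb P α η pc) (hη : IsSign η)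
    (hP : ∀ p ∈ Set.Icc (0 : ℝ) 1, IsBernoulli p (P p)) (hα : 0 ≤ α) {θ : ℝ} (hθ : 1 < θ) :
    (1 - tiltDim η * θ ^ (α - 1) - 2 * d * θ⁻¹) * θ⁻¹ ≤ 1 - pc := by
  have hθ0 : 0 < θ := by linarith
  set q : ℝ := (1 - tiltDim η * θ ^ (α - 1) - 2 * d * θ⁻¹) * θ⁻¹
  have hqθ : q * θ = 1 - tiltDim η * θ ^ (α - 1) - 2 * d * θ⁻¹ := inv_mul_cancel_right₀ hθ0.ne' _
  rcases le_total q 0 with hq0 | hq0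
  · linarith [hpc.1.2]
  have hq1 : q ≤ 1 := by
    have hk : 0 ≤ tiltDim η * θ ^ (α - 1) := by positivity
    have hd : 0 ≤ 2 * d * θ⁻¹ := by positivity
    nlinarith
  have hle : pc ≤ 1 - q := hpc.le_of_measure_LIP_eq_one (by linarith)
    (measure_LIP_eq_one hα hθ (by linarith) hη (hP _ ⟨by linarith, by linarith⟩) (by linarith))
  linarith

lemma IsCriticalProb.le_one_sub_mul_rpow (hpc : IsCriticalProb P α η pc) (hη : IsSign η)
    (hP : ∀ p ∈ Set.Icc (0 : ℝ) 1, IsBernoulli p (P p)) (hα : α ∈ Set.Ico (0 : ℝ) 1)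
    (hk : 1 ≤ tiltDim η) {b : ℝ} (hb : 1 < b) :
    (1 - b⁻¹ - 2 * d * ((b * tiltDim η) ^ (1 / (1 - α)))⁻¹) * (b ^ (1 / (1 - α)))⁻¹ ≤
      (1 - pc) * (tiltDim η : ℝ) ^ (1 / (1 - α)) := by
  have hα1 : 0 < 1 - α := sub_pos.2 hα.2
  have hb0 : 0 < b := by linarith
  have hk1 : (1 : ℝ) ≤ tiltDim η := by exact_mod_cast hk
  have hk0 : (0 : ℝ) < tiltDim η := by linarith
  set θ : ℝ := (b * tiltDim η) ^ (1 / (1 - α)) with hθ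
  have hθ1 : 1 < θ := Real.one_lt_rpow (by nlinarith) (by positivity)
  have htilt : tiltDim η * θ ^ (α - 1) = b⁻¹ := by
    have hexp : 1 / (1 - α) * (α - 1) = -1 := by field_simp; ring
    rw [hθ, ← Real.rpow_mul (by positivity), hexp, Real.rpow_neg_one]
    field_simp
  have hsplit : θ = b ^ (1 / (1 - α)) * (tiltDim η : ℝ) ^ (1 / (1 - α)) :=
    Real.mul_rpow hb0.le hk0.le
  have hbound := hpc.mul_inv_le_one_sub hη hP hα.1 hθ1
  rw [htilt] at hbound
  calc (1 - b⁻¹ - 2 * d * θ⁻¹) * (b ^ (1 / (1 - α)))⁻¹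
      = (1 - b⁻¹ - 2 * d * θ⁻¹) * θ⁻¹ * (tiltDim η : ℝ) ^ (1 / (1 - α)) := by
        generalize 1 - b⁻¹ - 2 * d * θ⁻¹ = a
        rw [hsplit]
        field_simp
    _ ≤ (1 - pc) * (tiltDim η : ℝ) ^ (1 / (1 - α)) := by gcongr

lemma IsCriticalProb.one_sub_mul_rpow_le_of_mul_lt (hpc : IsCriticalProb P α η pc)
    (hη : IsSign η) (hP : ∀ p ∈ Set.Icc (0 : ℝ) 1, IsBernoulli p (P p)) (hα : 0 ≤ α)
    (hk : 8 ≤ tiltDim η) {g : ℝ} (hg : 1 ≤ g) (hgα : (1 - α) * g < 1)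
    {T : ℕ} (hT : T ≤ tiltDim η) (hgT : g + 2 ≤ T) :
    (1 - pc) * (tiltDim η : ℝ) ^ g ≤ 2 * collisionConst T := by
  by_contra! hlt
  set q : ℝ := 2 * collisionConst T / (tiltDim η : ℝ) ^ g with hq
  have hk0 : (0 : ℝ) < tiltDim η := by exact_mod_cast (by omega : 0 < tiltDim η)
  have hkg : 0 < (tiltDim η : ℝ) ^ g := by positivity
  have hq0 : 0 < q := by
    rw [hq, collisionConst]
    positivity
  have hqpc : q < 1 - pc := by rwa [hq, div_lt_iff₀ hkg]
  have hhalf : P (1 - q) (LIP α η) ≤ 1 / 2 :=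
    measure_LIP_le_half_of_collisionConst_le hη hα hk hg hgα hT hgT
      (by linarith [hpc.1.1]) (by linarith)
      (by rw [_root_.sub_sub_cancel, hq, div_mul_cancel₀ _ hkg.ne'])
      (hP _ ⟨by linarith [hpc.1.1], by linarith⟩)
  linarith [hpc.ge_of_measure_LIP_le_half (by linarith) hhalf]

lemma IsCriticalProb.one_sub_mul_rpow_le (hpc : IsCriticalProb P α η pc) (hη : IsSign η)
    (hP : ∀ p ∈ Set.Icc (0 : ℝ) 1, IsBernoulli p (P p)) (hα : α ∈ Set.Ico (0 : ℝ) 1)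
    (hk : 8 ≤ tiltDim η) (hlog : (Real.log (tiltDim η))⁻¹ ≤ α / (1 - α))
    {T : ℕ} (hT : T ≤ tiltDim η) (hαT : 1 / (1 - α) + 2 ≤ T) :
    (1 - pc) * (tiltDim η : ℝ) ^ (1 / (1 - α)) ≤ 2 * collisionConst T * Real.exp 1 := by
  have hα1 : 0 < 1 - α := sub_pos.2 hα.2
  have hk1 : (1 : ℝ) < tiltDim η := by exact_mod_cast (by omega : 1 < tiltDim η)
  have hk0 : (0 : ℝ) < tiltDim η := by linarith
  have hlog0 : 0 < (Real.log (tiltDim η))⁻¹ := inv_pos.2 (Real.log_pos hk1)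
  set g : ℝ := 1 / (1 - α) - (Real.log (tiltDim η))⁻¹ with hg
  have hg1 : 1 ≤ g := by
    have hsub : 1 / (1 - α) = α / (1 - α) + 1 := by field_simp; ring
    linarith
  have hgα : (1 - α) * g < 1 := by
    rw [hg, mul_sub, mul_one_div_cancel hα1.ne']
    linarith [mul_pos hα1 hlog0]
  have hpow : (tiltDim η : ℝ) ^ (1 / (1 - α)) = (tiltDim η : ℝ) ^ g * Real.exp 1 := by
    rw [hg, Real.rpow_sub hk0, Real.rpow_inv_log hk0 hk1.ne',
      div_mul_cancel₀ _ (Real.exp_pos 1).ne']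
  rw [hpow, ← mul_assoc]
  refine mul_le_mul_of_nonneg_right ?_ (Real.exp_pos 1).le
  exact hpc.one_sub_mul_rpow_le_of_mul_lt hη hP hα.1 hk hg1 hgα hT (by linarith)

end CriticalProb

section LinearRegime

/-- The maximum over `b > 1` of `(1 - b⁻¹) * b ^ (-1 / t)` is attained at `b = 1 + t`. -/
lemma quarter_lt_one_sub_inv_mul_rpow {t : ℝ} (ht : t ∈ Set.Ioo (0 : ℝ) 1) :
    t / 4 < (1 - (1 + t)⁻¹) * ((1 + t) ^ (1 / t))⁻¹ := by
  have ht0 := ht.1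
  have h1 : 0 < 1 + t := by linarith
  have hconv : (1 + t) * Real.log (1 + t) < t * (2 * Real.log 2) := by
    have h := Real.strictConvexOn_mul_log.2 (x := 1) (y := 2) (by norm_num) (by norm_num)
      (by norm_num) (sub_pos.2 ht.2) ht0 (by ring)
    simpa [show 1 - t + t * 2 = 1 + t by ring] using h
  have hpow : (1 + t) ^ (1 / t) * (1 + t) < 4 := by
    have hexp : Real.log (1 + t) * (1 / t + 1) = (1 + t) * Real.log (1 + t) / t := by field_simp
    rw [← Real.rpow_add_one h1.ne', Real.rpow_def_of_pos h1, ← Real.lt_log_iff_exp_lt (by norm_num),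
      show (4 : ℝ) = 2 ^ 2 by norm_num, Real.log_pow, hexp, div_lt_iff₀ ht0]
    push_cast
    linarith
  calc t / 4 < t / ((1 + t) ^ (1 / t) * (1 + t)) := by gcongr
    _ = (1 - (1 + t)⁻¹) * ((1 + t) ^ (1 / t))⁻¹ := by field_simp; ring

lemma le_liminf_mul_of_tendsto_one {ι : Type*} {l : Filter ι} [l.NeBot] {u v : ι → ℝ} {a b C : ℝ}
    (hab : a < b) (hbu : ∀ᶠ i in l, b < u i) (huC : ∀ᶠ i in l, u i ≤ C)
    (hv : Tendsto v l (nhds 1)) : a ≤ l.liminf fun i => u i * v i := by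
  have hbdd : ∀ᶠ i in l, |u i| ≤ max |b| |C| := by
    filter_upwards [hbu, huC] with i hb hC using abs_le_max_abs_abs hb.le hC
  have herr : Tendsto (fun i => u i * (v i - 1)) l (nhds 0) :=
    bdd_le_mul_tendsto_zero' _ hbdd (by simpa using hv.sub_const 1)
  have hupper : ∀ᶠ i in l, u i * v i ≤ C + 1 := by
    filter_upwards [huC, herr.eventually_le_const one_pos] with i hC hi
    linarith
  refine le_liminf_of_le (IsBoundedUnder.isCoboundedUnder_ge ⟨C + 1, eventually_map.2 hupper⟩) ?_
  filter_upwards [hbu, herr.eventually_const_le (sub_neg.2 hab)] with i hb hi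
  linarith

variable {c : ℝ} {φ : ℕ → ℕ}

lemma tendsto_atTop_of_tendsto_div (hc : 0 < c)
    (hasymp : Tendsto (fun d : ℕ => (φ d : ℝ) / d) atTop (nhds c)) : Tendsto φ atTop atTop := by
  refine tendsto_natCast_atTop_iff.1 <|
    (hasymp.pos_mul_atTop hc tendsto_natCast_atTop_atTop).congr' ?_
  filter_upwards [eventually_ne_atTop 0] with d hd
  exact div_mul_cancel₀ _ (Nat.cast_ne_zero.2 hd)

lemma tendsto_mul_div_rpow (hc : 0 < c)
    (hasymp : Tendsto (fun d : ℕ => (φ d : ℝ) / d) atTop (nhds c)) (γ : ℝ) :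
    Tendsto (fun d : ℕ => (c * d / φ d) ^ γ) atTop (nhds 1) := by
  have h : Tendsto (fun d : ℕ => c * d / φ d) atTop (nhds 1) := by
    simpa [div_eq_mul_inv, hc.ne', mul_assoc] using (hasymp.inv₀ hc.ne').const_mul c
  simpa using h.rpow_const (p := γ) (Or.inl one_ne_zero)

lemma tendsto_mul_inv_mul_rpow (hc : 0 < c)
    (hasymp : Tendsto (fun d : ℕ => (φ d : ℝ) / d) atTop (nhds c)) {b γ : ℝ} (hb : 0 < b)
    (hγ : 1 < γ) : Tendsto (fun d : ℕ => (d : ℝ) * ((b * φ d) ^ γ)⁻¹) atTop (nhds 0) := by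
  have hφ : Tendsto φ atTop atTop := tendsto_atTop_of_tendsto_div hc hasymp
  have hpow : Tendsto (fun d : ℕ => ((b * φ d) ^ (γ - 1))⁻¹) atTop (nhds 0) :=
    tendsto_inv_atTop_zero.comp <| (tendsto_rpow_atTop (by linarith)).comp <|
      (tendsto_natCast_atTop_atTop.comp hφ).const_mul_atTop hb
  rw [← mul_zero (b * c)⁻¹]
  refine (((hasymp.const_mul b).inv₀ (by positivity)).mul hpow).congr' ?_
  filter_upwards [hφ.eventually_ge_atTop 1] with d hd
  have hφd : (0 : ℝ) < φ d := by exact_mod_cast hd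
  have hpos : 0 < (b * φ d) ^ (γ - 1) := by positivity
  rw [← sub_add_cancel γ 1, Real.rpow_add_one (by positivity), sub_add_cancel]
  field_simp

variable {α : ℝ} {P : (n : ℕ) → ℝ → Measure (Config n)} {pc : ℕ → ℝ}

lemma eventually_lt_one_sub_mul_rpow (hc : 0 < c) (hφ : ∀ d, φ d ≤ d)
    (hasymp : Tendsto (fun d : ℕ => (φ d : ℝ) / d) atTop (nhds c)) (hα : α ∈ Set.Ioo (0 : ℝ) 1)
    (hP : ∀ n, ∀ p ∈ Set.Icc (0 : ℝ) 1, IsBernoulli p (P n p))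
    (hpc : ∀ d, 1 ≤ d → IsCriticalProb (P d) α (etaK d (φ d)) (pc d)) {a b : ℝ} (hb : 1 < b)
    (hab : a < (1 - b⁻¹) * (b ^ (1 / (1 - α)))⁻¹) :
    ∀ᶠ d in atTop, a < (1 - pc d) * (φ d : ℝ) ^ (1 / (1 - α)) := by
  have hα1 : 0 < 1 - α := sub_pos.2 hα.2
  have hγ : 1 < 1 / (1 - α) := by rw [lt_div_iff₀ hα1]; linarith [hα.1]
  have hlim := (((tendsto_mul_inv_mul_rpow hc hasymp (by linarith : 0 < b) hγ).const_mul
    2).const_sub (1 - b⁻¹)).mul_const (b ^ (1 / (1 - α)))⁻¹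
  rw [mul_zero, sub_zero] at hlim
  filter_upwards [hlim.eventually_const_lt hab, eventually_ge_atTop 1,
    (tendsto_atTop_of_tendsto_div hc hasymp).eventually_ge_atTop 1] with d had hd hk
  have hbound := (hpc d hd).le_one_sub_mul_rpow (isSign_etaK d (φ d)) (hP d) ⟨hα.1.le, hα.2⟩
    (by rwa [tiltDim_etaK (hφ d)]) hb
  rw [tiltDim_etaK (hφ d)] at hbound
  linarith

lemma exists_eventually_one_sub_mul_rpow_le (hc : 0 < c) (hφ : ∀ d, φ d ≤ d)
    (hasymp : Tendsto (fun d : ℕ => (φ d : ℝ) / d) atTop (nhds c)) (hα : α ∈ Set.Ioo (0 : ℝ) 1)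
    (hP : ∀ n, ∀ p ∈ Set.Icc (0 : ℝ) 1, IsBernoulli p (P n p))
    (hpc : ∀ d, 1 ≤ d → IsCriticalProb (P d) α (etaK d (φ d)) (pc d)) :
    ∃ C, ∀ᶠ d in atTop, (1 - pc d) * (φ d : ℝ) ^ (1 / (1 - α)) ≤ C := by
  have hφtop := tendsto_atTop_of_tendsto_div hc hasymp
  have hlog : Tendsto (fun d => (Real.log (φ d))⁻¹) atTop (nhds 0) :=
    tendsto_inv_atTop_zero.comp
      (Real.tendsto_log_atTop.comp (tendsto_natCast_atTop_atTop.comp hφtop))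
  refine ⟨2 * collisionConst (⌈1 / (1 - α)⌉₊ + 2) * Real.exp 1, ?_⟩
  filter_upwards [hlog.eventually_le_const (div_pos hα.1 (sub_pos.2 hα.2)),
    eventually_ge_atTop 1, hφtop.eventually_ge_atTop 8,
    hφtop.eventually_ge_atTop (⌈1 / (1 - α)⌉₊ + 2)] with d hlogd hd hk hT
  rw [← tiltDim_etaK (hφ d)] at hlogd hk hT ⊢
  refine (hpc d hd).one_sub_mul_rpow_le (isSign_etaK d _) (hP d) ⟨hα.1.le, hα.2⟩ hk hlogd hT ?_
  push_cast
  gcongr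
  exact Nat.le_ceil _

end LinearRegime

/-- If `φ(d) ≤ d` and `φ(d) ∼ c·d` as `d → ∞` for some `c ∈ (0,1]`,
then for every `α ∈ (0,1)`:
`liminf_{d→∞} q_L(α,d,φ(d)) · (cd)^{1/(1−α)} ≥ (1−α)/4`. -/
theorem qL_liminf_linear_case
    (c : ℝ) (hc : c ∈ Set.Ioc (0 : ℝ) 1)
    (φ : ℕ → ℕ) (hφ : ∀ d : ℕ, φ d ≤ d)
    (hasymp : Tendsto (fun d : ℕ => (φ d : ℝ) / (d : ℝ)) atTop (nhds c))
    (α : ℝ) (hα : α ∈ Set.Ioo (0 : ℝ) 1)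
    (P : (n : ℕ) → ℝ → Measure (Config n))
    (hP : ∀ n : ℕ, ∀ p ∈ Set.Icc (0 : ℝ) 1, IsBernoulli p (P n p))
    (pc : ℕ → ℝ) (hpc : ∀ d : ℕ, 1 ≤ d → IsCriticalProb (P d) α (etaK d (φ d)) (pc d)) :
    (1 - α) / 4 ≤
      atTop.liminf fun d : ℕ => (1 - pc d) * (c * d) ^ ((1 : ℝ) / (1 - α)) := by
  obtain ⟨b, hb, hb'⟩ :=
    exists_between (quarter_lt_one_sub_inv_mul_rpow ⟨sub_pos.2 hα.2, sub_lt_self 1 hα.1⟩)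
  have hlower := eventually_lt_one_sub_mul_rpow hc.1 hφ hasymp hα hP hpc
    (lt_add_of_pos_right 1 (sub_pos.2 hα.2)) hb'
  obtain ⟨C, hupper⟩ := exists_eventually_one_sub_mul_rpow_le hc.1 hφ hasymp hα hP hpc
  have hratio := tendsto_mul_div_rpow hc.1 hasymp (1 / (1 - α))
  refine (le_liminf_mul_of_tendsto_one hb hlower hupper hratio).trans_eq (liminf_congr ?_)
  filter_upwards [(tendsto_atTop_of_tendsto_div hc.1 hasymp).eventually_ge_atTop 1] with d hd
  have hφd : (0 : ℝ) < φ d := by exact_mod_cast hd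
  have hc0 : 0 < c := hc.1
  rw [mul_assoc, ← Real.mul_rpow hφd.le (by positivity), mul_div_cancel₀ _ hφd.ne']
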